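/- arXiv:math/0602677 — 10 statements merged into one kernel-verified Lean document; each statement's English description precedes it below -/
import Mathlib

section
/- Let H and H̃ be complex Hilbert spaces, let U, V be unitary operators on H and Ũ, Ṽ unitary operators on H̃, and let H_1,…,H_5 ⊆ H⊕H and H̃_1,…,H̃_5 ⊆ H̃⊕H̃ be the associated quintuples of subspaces (H_1 = H⊕0, H_2 = 0⊕H, H_3 = {(x,x)}, H_4 = {(Ux,x)}, H_5 = {(Vx,x)}, and analogously for the tilde data). Then a bounded linear operator 𝓡 : H⊕H → H̃⊕H̃ satisfies 𝓡(H_i) ⊆ H̃_i for all i = 1,…,5 if and only if 𝓡 = R⊕R for some bounded operator R : H → H̃ with RU = ŨR and RV = ṼR. -/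
/-!
An operator preserving `H ⊕ 0` and `0 ⊕ H` is a direct sum `A ⊕ B`, and `A ⊕ B` maps
`{(f x, x)}` into `{(f' y, y)}` exactly when `A ∘ f = f' ∘ B`. The diagonal is the case
`f = id`, which forces `A = B`; the remaining two subspaces are the cases `f = U` and `f = V`.
-/

section TopologicalModule

variable {𝕜 E F E' F' : Type*} [Semiring 𝕜]
  [AddCommMonoid E] [Module 𝕜 E] [TopologicalSpace E]
  [AddCommMonoid F] [Module 𝕜 F] [TopologicalSpace F]
  [AddCommMonoid E'] [Module 𝕜 E'] [TopologicalSpace E']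
  [AddCommMonoid F'] [Module 𝕜 F'] [TopologicalSpace F']

theorem exists_eq_prodMap_iff {T : E × F →L[𝕜] E' × F'} :
    (∃ (A : E →L[𝕜] E') (B : F →L[𝕜] F'), T = A.prodMap B) ↔
      (∀ x, ∃ y, T (x, 0) = (y, 0)) ∧ ∀ x, ∃ y, T (0, x) = (0, y) := by
  constructor
  · rintro ⟨A, B, rfl⟩
    exact ⟨fun x => ⟨A x, by simp⟩, fun x => ⟨B x, by simp⟩⟩
  · rintro ⟨hfst, hsnd⟩
    refine ⟨.fst 𝕜 E' F' ∘L T ∘L .inl 𝕜 E F, .snd 𝕜 E' F' ∘L T ∘L .inr 𝕜 E F, ?_⟩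
    refine ContinuousLinearMap.prod_ext (ContinuousLinearMap.ext fun x => ?_)
      (ContinuousLinearMap.ext fun x => ?_)
    · obtain ⟨y, hy⟩ := hfst x
      simp [hy, Prod.mk_zero_zero]
    · obtain ⟨y, hy⟩ := hsnd x
      simp [hy, Prod.mk_zero_zero]

theorem forall_exists_prodMap_graph_iff {A : E →L[𝕜] E'} {B : F →L[𝕜] F'}
    {U : F →L[𝕜] E} {U' : F' →L[𝕜] E'} :
    (∀ x, ∃ y, A.prodMap B (U x, x) = (U' y, y)) ↔ A ∘L U = U' ∘L B := by
  simp [Prod.ext_iff, ContinuousLinearMap.ext_iff]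

theorem forall_exists_prodMap_diagonal_iff {A B : E →L[𝕜] E'} :
    (∀ x, ∃ y, A.prodMap B (x, x) = (y, y)) ↔ A = B :=
  forall_exists_prodMap_graph_iff (U := .id 𝕜 E) (U' := .id 𝕜 E')

theorem stmt_0_general (U V : E →L[𝕜] E) (U' V' : E' →L[𝕜] E') (𝓡 : (E × E) →L[𝕜] (E' × E')) :
    ((∀ x : E, ∃ y : E', 𝓡 (x, 0) = (y, 0)) ∧
     (∀ x : E, ∃ y : E', 𝓡 (0, x) = (0, y)) ∧
     (∀ x : E, ∃ y : E', 𝓡 (x, x) = (y, y)) ∧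
     (∀ x : E, ∃ y : E', 𝓡 (U x, x) = (U' y, y)) ∧
     (∀ x : E, ∃ y : E', 𝓡 (V x, x) = (V' y, y))) ↔
    (∃ R : E →L[𝕜] E', (∀ p : E × E, 𝓡 p = (R p.1, R p.2)) ∧
      R ∘L U = U' ∘L R ∧ R ∘L V = V' ∘L R) := by
  constructor
  · rintro ⟨hfst, hsnd, hdiag, hU, hV⟩
    obtain ⟨A, B, rfl⟩ := exists_eq_prodMap_iff.2 ⟨hfst, hsnd⟩
    obtain rfl : A = B := forall_exists_prodMap_diagonal_iff.1 hdiag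
    exact ⟨A, fun _ => rfl, forall_exists_prodMap_graph_iff.1 hU,
      forall_exists_prodMap_graph_iff.1 hV⟩
  · rintro ⟨R, hR, hU, hV⟩
    obtain rfl : 𝓡 = R.prodMap R := ContinuousLinearMap.ext hR
    obtain ⟨hfst, hsnd⟩ := exists_eq_prodMap_iff.1 ⟨R, R, rfl⟩
    exact ⟨hfst, hsnd, forall_exists_prodMap_diagonal_iff.2 rfl,
      forall_exists_prodMap_graph_iff.2 hU, forall_exists_prodMap_graph_iff.2 hV⟩

end TopologicalModule

/-- A bounded operator `𝓡 : H⊕H → H̃⊕H̃` maps each of the five subspaces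
`H⊕0`, `0⊕H`, `{(x,x)}`, `{(Ux,x)}`, `{(Vx,x)}` into the corresponding tilde subspace
iff `𝓡 = R⊕R` for some bounded `R` intertwining the unitary pairs. -/
theorem stmt_0
    {H H' : Type*}
    [NormedAddCommGroup H] [InnerProductSpace ℂ H] [CompleteSpace H]
    [NormedAddCommGroup H'] [InnerProductSpace ℂ H'] [CompleteSpace H']
    (U V : H →L[ℂ] H) (U' V' : H' →L[ℂ] H')
    (hU : U ∈ unitary (H →L[ℂ] H)) (hV : V ∈ unitary (H →L[ℂ] H))
    (hU' : U' ∈ unitary (H' →L[ℂ] H')) (hV' : V' ∈ unitary (H' →L[ℂ] H'))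
    (𝓡 : (H × H) →L[ℂ] (H' × H')) :
    ((∀ x : H, ∃ y : H', 𝓡 (x, 0) = (y, 0)) ∧
     (∀ x : H, ∃ y : H', 𝓡 (0, x) = (0, y)) ∧
     (∀ x : H, ∃ y : H', 𝓡 (x, x) = (y, y)) ∧
     (∀ x : H, ∃ y : H', 𝓡 (U x, x) = (U' y, y)) ∧
     (∀ x : H, ∃ y : H', 𝓡 (V x, x) = (V' y, y))) ↔
    (∃ R : H →L[ℂ] H', (∀ p : H × H, 𝓡 p = (R p.1, R p.2)) ∧
      R ∘L U = U' ∘L R ∧ R ∘L V = V' ∘L R) :=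
  stmt_0_general U V U' V' 𝓡
end

section
/- Let H be a complex Hilbert space and U, V unitary operators on H, and let S_{U,V} be the associated system of five subspaces of H⊕H. Then S_{U,V} is transitive if and only if the pair (U,V) is irreducible, i.e., every bounded operator R on H with RU = UR and RV = VR is a scalar multiple of the identity. -/
/-!
Preserving the two coordinate subspaces makes an operator on `E × E` diagonal, and preserving the
diagonal then forces its two entries to coincide, so it is `R ⊕ R`. Such an operator preserves
`{(W x, x)}` exactly when `R` commutes with `W`: the second coordinate of the image of `(W x, x)`
is `R x`, so its first coordinate `R (W x)` has to be `W (R x)`.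
-/

section PreservedSubspaces

variable {𝕜 E : Type*} [Semiring 𝕜] [AddCommMonoid E] [TopologicalSpace E] [Module 𝕜 E]

lemma preserves_axes_and_diagonal_iff_exists_eq_prodMap_self (T : (E × E) →L[𝕜] (E × E)) :
    ((∀ x, ∃ y, T (x, 0) = (y, 0)) ∧ (∀ x, ∃ y, T (0, x) = (0, y)) ∧
      (∀ x, ∃ y, T (x, x) = (y, y))) ↔
      ∃ R : E →L[𝕜] E, T = R.prodMap R := by
  constructor
  · rintro ⟨h_left, h_right, h_diag⟩
    let R : E →L[𝕜] E := .fst 𝕜 E E ∘L T ∘L .inl 𝕜 E E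
    have T_left (a : E) : T (a, 0) = (R a, 0) := by
      obtain ⟨y, hy⟩ := h_left a
      simp [R, hy]
    have T_add (a b : E) : T (a, b) = T (a, 0) + T (0, b) := by
      rw [← map_add, Prod.mk_add_mk, add_zero, zero_add]
    have T_right (b : E) : T (0, b) = (0, R b) := by
      obtain ⟨z, hz⟩ := h_right b
      obtain ⟨d, hd⟩ := h_diag b
      rw [T_add, T_left, hz, Prod.mk_add_mk, add_zero, zero_add] at hd
      obtain ⟨hR, rfl⟩ := Prod.mk.inj hd
      rw [hz, hR]
    refine ⟨R, ContinuousLinearMap.ext fun ⟨a, b⟩ => ?_⟩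
    rw [T_add, T_left, T_right, Prod.mk_add_mk, add_zero, zero_add,
      ContinuousLinearMap.coe_prodMap', Prod.map_apply]
  · rintro ⟨R, rfl⟩
    exact ⟨fun x => ⟨R x, by simp⟩, fun x => ⟨R x, by simp⟩, fun x => ⟨R x, by simp⟩⟩

lemma prodMap_self_preserves_graph_iff_comp_comm (R W : E →L[𝕜] E) :
    (∀ x, ∃ y, R.prodMap R (W x, x) = (W y, y)) ↔ R ∘L W = W ∘L R := by
  simp [ContinuousLinearMap.ext_iff]

end PreservedSubspaces

section Scalars

variable {𝕜 E : Type*} [CommSemiring 𝕜] [AddCommMonoid E] [TopologicalSpace E] [Module 𝕜 E]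
  [ContinuousConstSMul 𝕜 E]

lemma prodMap_self_eq_smul_one_iff (R : E →L[𝕜] E) (c : 𝕜) :
    R.prodMap R = c • (1 : (E × E) →L[𝕜] (E × E)) ↔ R = c • (1 : E →L[𝕜] E) := by
  simp [ContinuousLinearMap.ext_iff, forall_and]

theorem stmt_1_general (S : Set (E →L[𝕜] E)) :
    (∀ T : (E × E) →L[𝕜] (E × E),
      (∀ x, ∃ y, T (x, 0) = (y, 0)) →
      (∀ x, ∃ y, T (0, x) = (0, y)) →
      (∀ x, ∃ y, T (x, x) = (y, y)) →
      (∀ W ∈ S, ∀ x, ∃ y, T (W x, x) = (W y, y)) →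
      ∃ c : 𝕜, T = c • (1 : (E × E) →L[𝕜] (E × E))) ↔
    (∀ R : E →L[𝕜] E, (∀ W ∈ S, R ∘L W = W ∘L R) →
      ∃ c : 𝕜, R = c • (1 : E →L[𝕜] E)) := by
  constructor
  · intro transitive R h_comm
    obtain ⟨h_left, h_right, h_diag⟩ :=
      (preserves_axes_and_diagonal_iff_exists_eq_prodMap_self (R.prodMap R)).2 ⟨R, rfl⟩
    obtain ⟨c, hc⟩ := transitive (R.prodMap R) h_left h_right h_diag fun W hW =>
      (prodMap_self_preserves_graph_iff_comp_comm R W).2 (h_comm W hW)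
    exact ⟨c, (prodMap_self_eq_smul_one_iff R c).1 hc⟩
  · intro irreducible T h_left h_right h_diag h_graph
    obtain ⟨R, rfl⟩ :=
      (preserves_axes_and_diagonal_iff_exists_eq_prodMap_self T).1 ⟨h_left, h_right, h_diag⟩
    obtain ⟨c, hc⟩ := irreducible R fun W hW =>
      (prodMap_self_preserves_graph_iff_comp_comm R W).1 (h_graph W hW)
    exact ⟨c, (prodMap_self_eq_smul_one_iff R c).2 hc⟩

end Scalars

/-- The system `S_{U,V}` of five subspaces of `H⊕H` is transitive iff the
pair of unitaries `(U,V)` is irreducible. -/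
theorem stmt_1
    {H : Type*}
    [NormedAddCommGroup H] [InnerProductSpace ℂ H] [CompleteSpace H]
    (U V : H →L[ℂ] H)
    (hU : U ∈ unitary (H →L[ℂ] H)) (hV : V ∈ unitary (H →L[ℂ] H)) :
    (∀ 𝓡 : (H × H) →L[ℂ] (H × H),
      (∀ x : H, ∃ y : H, 𝓡 (x, 0) = (y, 0)) →
      (∀ x : H, ∃ y : H, 𝓡 (0, x) = (0, y)) →
      (∀ x : H, ∃ y : H, 𝓡 (x, x) = (y, y)) →
      (∀ x : H, ∃ y : H, 𝓡 (U x, x) = (U y, y)) →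
      (∀ x : H, ∃ y : H, 𝓡 (V x, x) = (V y, y)) →
      ∃ c : ℂ, 𝓡 = c • (1 : (H × H) →L[ℂ] (H × H))) ↔
    (∀ R : H →L[ℂ] H, R ∘L U = U ∘L R → R ∘L V = V ∘L R →
      ∃ c : ℂ, R = c • (1 : H →L[ℂ] H)) := by
  simpa only [Set.forall_mem_insert, Set.mem_singleton_iff, forall_eq, and_imp] using
    stmt_1_general {U, V}
end

section
/- Let H and H̃ be complex Hilbert spaces, U, V unitary operators on H, and Ũ, Ṽ unitary operators on H̃, with associated systems of five subspaces S_{U,V} of H⊕H and S_{Ũ,Ṽ} of H̃⊕H̃. Then S_{U,V} is isomorphic to S_{Ũ,Ṽ} (there is a bounded invertible operator 𝓡 : H⊕H → H̃⊕H̃ with 𝓡(H_i) = H̃_i for i = 1,…,5) if and only if the pair (U,V) is unitarily equivalent to the pair (Ũ,Ṽ), i.e., there exists a unitary W : H → H̃ with WU = ŨW and WV = ṼW. -/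
/-!
An isomorphism `H × H ≃ H' × H'` that respects the two coordinate subspaces and the diagonal has
the form `A × A`, and `A × A` carries the graph of `T` onto the graph of `T'` exactly when
`A T = T' A`. So two systems are isomorphic precisely when the operators defining them are
simultaneously similar.

Similarity is upgraded to unitary equivalence by the polar decomposition `A = W S`: the relation
`A T = T' A` becomes `S T = N S`, where `S` is positive and invertible and `N = W⁻¹ T' W`. If `T`
and `T'` are normal, the Fuglede–Putnam–Rosenblum theorem gives `S T* = N* S`, that is,
`T S = S N`. Hence `S²` commutes with `T`, so does its square root `S`, and therefore `T = N`.
-/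

section Image

variable {X X' Y Y' : Type*}

theorem image_setOf_exists_eq_of_semiconj {c : X → X'} (hc : Function.Surjective c) {e : Y → Y'}
    {f : X → Y} {f' : X' → Y'} (h : ∀ x, e (f x) = f' (c x)) :
    e '' {p | ∃ x, p = f x} = {p | ∃ y, p = f' y} := by
  refine Set.Subset.antisymm ?_ ?_
  · rintro _ ⟨_, ⟨x, rfl⟩, rfl⟩
    exact ⟨c x, h x⟩
  · rintro _ ⟨y, rfl⟩
    obtain ⟨x, rfl⟩ := hc y
    exact ⟨f x, ⟨x, rfl⟩, h x⟩

theorem image_prodMap_graph_eq_iff {c : X → X'} (hc : Function.Surjective c) (e : Y → Y')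
    (f : X → Y) (f' : X' → Y') :
    Prod.map e c '' {p | ∃ x, p = (f x, x)} = {p | ∃ y, p = (f' y, y)} ↔
      ∀ x, e (f x) = f' (c x) := by
  refine ⟨fun h x ↦ ?_, fun h ↦ image_setOf_exists_eq_of_semiconj hc fun x ↦ Prod.ext (h x) rfl⟩
  obtain ⟨y, hy⟩ := h.subset ⟨(f x, x), ⟨x, rfl⟩, rfl⟩
  obtain ⟨hfst, hsnd⟩ := Prod.mk.inj hy
  exact hfst.trans (congrArg f' hsnd.symm)

end Image

section DiagonalAction

variable {𝕜 E E' : Type*} [Semiring 𝕜]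
  [AddCommMonoid E] [Module 𝕜 E] [TopologicalSpace E]
  [AddCommMonoid E'] [Module 𝕜 E'] [TopologicalSpace E']

theorem exists_continuousLinearEquiv_apply_inl {F F' : Type*}
    [AddCommMonoid F] [Module 𝕜 F] [TopologicalSpace F]
    [AddCommMonoid F'] [Module 𝕜 F'] [TopologicalSpace F'] (R : (E × F) ≃L[𝕜] (E' × F'))
    (h : R '' {p | ∃ x, p = (x, 0)} = {p | ∃ y, p = (y, 0)}) :
    ∃ A : E ≃L[𝕜] E', ∀ x, R (x, 0) = (A x, 0) := by
  have apply_inl (x : E) : R (x, 0) = ((R (x, 0)).1, 0) := by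
    obtain ⟨y, hy⟩ := h.subset ⟨(x, 0), ⟨x, rfl⟩, rfl⟩
    rw [hy]
  have symm_apply_inl (y : E') : R.symm (y, 0) = ((R.symm (y, 0)).1, 0) := by
    obtain ⟨_, ⟨x, rfl⟩, hx⟩ := h.superset ⟨y, rfl⟩
    rw [← hx, R.symm_apply_apply]
  refine ⟨.equivOfInverse (.fst 𝕜 E' F' ∘L (R : E × F →L[𝕜] E' × F') ∘L .inl 𝕜 E F)
    (.fst 𝕜 E F ∘L (R.symm : E' × F' →L[𝕜] E × F) ∘L .inl 𝕜 E' F')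
    (fun x ↦ ?_) (fun y ↦ ?_), apply_inl⟩
  · change (R.symm ((R (x, 0)).1, 0)).1 = x
    rw [← apply_inl, R.symm_apply_apply]
  · change (R ((R.symm (y, 0)).1, 0)).1 = y
    rw [← symm_apply_inl, R.apply_symm_apply]

theorem image_axes_and_diagonal_iff_exists_prodCongr_self (R : (E × E) ≃L[𝕜] (E' × E')) :
    (R '' {p | ∃ x, p = (x, 0)} = {p | ∃ y, p = (y, 0)} ∧
      R '' {p | ∃ x, p = (0, x)} = {p | ∃ y, p = (0, y)} ∧
      R '' {p | ∃ x, p = (x, x)} = {p | ∃ y, p = (y, y)}) ↔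
    ∃ A : E ≃L[𝕜] E', R = A.prodCongr A := by
  constructor
  · rintro ⟨hinl, hinr, hdiag⟩
    obtain ⟨A, hA⟩ := exists_continuousLinearEquiv_apply_inl R hinl
    have apply_inr (x : E) : R (0, x) = (0, A x) := by
      obtain ⟨z, hz⟩ := hinr.subset ⟨(0, x), ⟨x, rfl⟩, rfl⟩
      obtain ⟨y, hy⟩ := hdiag.subset ⟨(x, x), ⟨x, rfl⟩, rfl⟩
      have hsum : R (x, x) = R (x, 0) + R (0, x) := by simp [← map_add]
      rw [hy, hA, hz, Prod.mk_add_mk, add_zero, zero_add, Prod.mk.injEq] at hsum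
      rw [hz, ← hsum.2, hsum.1]
    refine ⟨A, ContinuousLinearEquiv.ext (funext fun ⟨x, y⟩ ↦ ?_)⟩
    calc R (x, y) = R (x, 0) + R (0, y) := by simp [← map_add]
      _ = (A x, A y) := by simp [hA, apply_inr]
  · rintro ⟨A, rfl⟩
    exact ⟨image_setOf_exists_eq_of_semiconj A.surjective fun x ↦ by simp,
      image_setOf_exists_eq_of_semiconj A.surjective fun x ↦ by simp,
      image_setOf_exists_eq_of_semiconj A.surjective fun x ↦ by simp⟩

theorem exists_image_axes_diagonal_graph_iff_exists_intertwining {ι : Type*} (T : ι → E → E)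
    (T' : ι → E' → E') :
    (∃ R : (E × E) ≃L[𝕜] (E' × E'),
      R '' {p | ∃ x, p = (x, 0)} = {p | ∃ y, p = (y, 0)} ∧
      R '' {p | ∃ x, p = (0, x)} = {p | ∃ y, p = (0, y)} ∧
      R '' {p | ∃ x, p = (x, x)} = {p | ∃ y, p = (y, y)} ∧
      ∀ i, R '' {p | ∃ x, p = (T i x, x)} = {p | ∃ y, p = (T' i y, y)}) ↔
    ∃ A : E ≃L[𝕜] E', ∀ i x, A (T i x) = T' i (A x) := by
  have image_graph_iff (A : E ≃L[𝕜] E') (i : ι) :=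
    image_prodMap_graph_eq_iff A.surjective A (T i) (T' i)
  constructor
  · rintro ⟨R, hinl, hinr, hdiag, hgraph⟩
    obtain ⟨A, rfl⟩ :=
      (image_axes_and_diagonal_iff_exists_prodCongr_self R).1 ⟨hinl, hinr, hdiag⟩
    exact ⟨A, fun i ↦ (image_graph_iff A i).1 (hgraph i)⟩
  · rintro ⟨A, hA⟩
    obtain ⟨hinl, hinr, hdiag⟩ :=
      (image_axes_and_diagonal_iff_exists_prodCongr_self (A.prodCongr A)).2 ⟨A, rfl⟩
    exact ⟨A.prodCongr A, hinl, hinr, hdiag, fun i ↦ (image_graph_iff A i).2 (hA i)⟩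

end DiagonalAction

theorem eq_of_semiconjBy_of_isStrictlyPositive {A : Type*} [CStarAlgebra A] [PartialOrder A]
    [StarOrderedRing A] {p a b : A} (hp : IsStrictlyPositive p) (ha : IsStarNormal a)
    (hb : IsStarNormal b) (h : SemiconjBy p a b) : a = b := by
  have h_symm : a * p = p * b := by
    simpa [hp.isSelfAdjoint.star_eq] using congrArg star (h.star_right ha hb).eq
  have h_sq : Commute (p * p) a := by
    calc p * p * a = p * b * p := by rw [mul_assoc, h.eq, mul_assoc]
      _ = a * (p * p) := by rw [← h_symm, mul_assoc]
  have h_comm : Commute p a := by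
    rw [← CFC.sqrt_mul_self p hp.nonneg]
    exact h_sq.cfcₙ_nnreal NNReal.sqrt
  exact hp.isUnit.mul_right_cancel (h_comm.eq.symm.trans h.eq)

section HilbertSpace

open ContinuousLinearMap

theorem isUnit_adjoint_comp_self {𝕜 H H' : Type*} [RCLike 𝕜]
    [NormedAddCommGroup H] [InnerProductSpace 𝕜 H] [CompleteSpace H]
    [NormedAddCommGroup H'] [InnerProductSpace 𝕜 H'] [CompleteSpace H'] (A : H ≃L[𝕜] H') :
    IsUnit (adjoint (A : H →L[𝕜] H') ∘L (A : H →L[𝕜] H')) := by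
  have left_inv : Function.LeftInverse (adjoint (A.symm : H' →L[𝕜] H))
      (adjoint (A : H →L[𝕜] H')) := fun y ↦ by
    rw [← comp_apply, ← adjoint_comp, A.coe_comp_coe_symm, adjoint_id, id_apply]
  have right_inv : Function.RightInverse (adjoint (A.symm : H' →L[𝕜] H))
      (adjoint (A : H →L[𝕜] H')) := fun x ↦ by
    rw [← comp_apply, ← adjoint_comp, A.coe_symm_comp_coe, adjoint_id, id_apply]
  have bijective_adjoint : Function.Bijective (adjoint (A : H →L[𝕜] H')) :=
    ⟨left_inv.injective, right_inv.surjective⟩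
  exact isUnit_iff_bijective.2 (bijective_adjoint.comp A.bijective)

variable {H H' : Type*}
  [NormedAddCommGroup H] [InnerProductSpace ℂ H] [CompleteSpace H]
  [NormedAddCommGroup H'] [InnerProductSpace ℂ H'] [CompleteSpace H']

theorem norm_sqrt_adjoint_comp_self_apply (A : H →L[ℂ] H') (x : H) :
    ‖CFC.sqrt (adjoint A ∘L A) x‖ = ‖A x‖ := by
  have sqrt_adjoint : adjoint (CFC.sqrt (adjoint A ∘L A)) = CFC.sqrt (adjoint A ∘L A) :=
    (CFC.sqrt_nonneg _).isSelfAdjoint.star_eq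
  have nonneg : 0 ≤ adjoint A ∘L A := (nonneg_iff_isPositive _).2 A.isPositive_adjoint_comp_self
  rw [apply_norm_eq_sqrt_inner_adjoint_left, apply_norm_eq_sqrt_inner_adjoint_left A, sqrt_adjoint,
    ← mul_def, CFC.sqrt_mul_sqrt_self _ nonneg]

theorem exists_polar_decomposition (A : H ≃L[ℂ] H') :
    ∃ (W : H ≃ₗᵢ[ℂ] H') (S : H →L[ℂ] H), IsStrictlyPositive S ∧ ∀ x, A x = W (S x) := by
  have hP : IsStrictlyPositive (adjoint (A : H →L[ℂ] H') ∘L (A : H →L[ℂ] H')) :=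
    (isUnit_adjoint_comp_self A).isStrictlyPositive
      ((nonneg_iff_isPositive _).2 (isPositive_adjoint_comp_self _))
  have hS := hP.sqrt
  let S : H ≃L[ℂ] H := ContinuousLinearEquiv.unitsEquiv ℂ H hS.isUnit.unit
  have norm_S (x : H) : ‖S x‖ = ‖A x‖ := norm_sqrt_adjoint_comp_self_apply (A : H →L[ℂ] H') x
  refine ⟨⟨(S.symm.trans A).toLinearEquiv, fun x ↦ ?_⟩, S, hS, fun x ↦ ?_⟩
  · change ‖A (S.symm x)‖ = ‖x‖
    rw [← norm_S, S.apply_symm_apply]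
  · change A x = A (S.symm (S x))
    rw [S.symm_apply_apply]

theorem exists_intertwining_iff_linearIsometryEquiv_of_isStarNormal {ι : Type*} {T : ι → H →L[ℂ] H}
    {T' : ι → H' →L[ℂ] H'} (hT : ∀ i, IsStarNormal (T i)) (hT' : ∀ i, IsStarNormal (T' i)) :
    (∃ A : H ≃L[ℂ] H', ∀ i x, A (T i x) = T' i (A x)) ↔
      ∃ W : H ≃ₗᵢ[ℂ] H', ∀ i x, W (T i x) = T' i (W x) := by
  refine ⟨fun ⟨A, hA⟩ ↦ ?_, fun ⟨W, hW⟩ ↦ ⟨W.toContinuousLinearEquiv, hW⟩⟩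
  obtain ⟨W, S, hS, hAWS⟩ := exists_polar_decomposition A
  have h_eq (i : ι) : T i = W.symm.conjStarAlgEquiv (T' i) := by
    refine eq_of_semiconjBy_of_isStrictlyPositive hS (hT i) ((hT' i).map _) ?_
    ext x
    simpa [hAWS] using congrArg W.symm (hA i x)
  exact ⟨W, fun i x ↦ by simp [h_eq i]⟩

end HilbertSpace

theorem stmt_2_general {ι H H' : Type*}
    [NormedAddCommGroup H] [InnerProductSpace ℂ H] [CompleteSpace H]
    [NormedAddCommGroup H'] [InnerProductSpace ℂ H'] [CompleteSpace H']
    (T : ι → H →L[ℂ] H) (T' : ι → H' →L[ℂ] H')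
    (hT : ∀ i, IsStarNormal (T i)) (hT' : ∀ i, IsStarNormal (T' i)) :
    (∃ R : (H × H) ≃L[ℂ] (H' × H'),
      R '' {p | ∃ x, p = (x, 0)} = {p | ∃ y, p = (y, 0)} ∧
      R '' {p | ∃ x, p = (0, x)} = {p | ∃ y, p = (0, y)} ∧
      R '' {p | ∃ x, p = (x, x)} = {p | ∃ y, p = (y, y)} ∧
      ∀ i, R '' {p | ∃ x, p = (T i x, x)} = {p | ∃ y, p = (T' i y, y)}) ↔
    ∃ W : H ≃ₗᵢ[ℂ] H', ∀ i x, W (T i x) = T' i (W x) :=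
  (exists_image_axes_diagonal_graph_iff_exists_intertwining _ _).trans
    (exists_intertwining_iff_linearIsometryEquiv_of_isStarNormal hT hT')

/-- `S_{U,V} ≅ S_{Ũ,Ṽ}` iff the pair `(U,V)` is unitarily equivalent
to the pair `(Ũ,Ṽ)`. -/
theorem stmt_2
    {H H' : Type*}
    [NormedAddCommGroup H] [InnerProductSpace ℂ H] [CompleteSpace H]
    [NormedAddCommGroup H'] [InnerProductSpace ℂ H'] [CompleteSpace H']
    (U V : H →L[ℂ] H) (U' V' : H' →L[ℂ] H')
    (hU : U ∈ unitary (H →L[ℂ] H)) (hV : V ∈ unitary (H →L[ℂ] H))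
    (hU' : U' ∈ unitary (H' →L[ℂ] H')) (hV' : V' ∈ unitary (H' →L[ℂ] H')) :
    (∃ 𝓡 : (H × H) ≃L[ℂ] (H' × H'),
      (⇑𝓡 '' {p : H × H | ∃ x : H, p = (x, 0)} = {p : H' × H' | ∃ y : H', p = (y, 0)}) ∧
      (⇑𝓡 '' {p : H × H | ∃ x : H, p = (0, x)} = {p : H' × H' | ∃ y : H', p = (0, y)}) ∧
      (⇑𝓡 '' {p : H × H | ∃ x : H, p = (x, x)} = {p : H' × H' | ∃ y : H', p = (y, y)}) ∧
      (⇑𝓡 '' {p : H × H | ∃ x : H, p = (U x, x)} = {p : H' × H' | ∃ y : H', p = (U' y, y)}) ∧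
      (⇑𝓡 '' {p : H × H | ∃ x : H, p = (V x, x)} = {p : H' × H' | ∃ y : H', p = (V' y, y)})) ↔
    (∃ W : H ≃ₗᵢ[ℂ] H', (∀ x : H, W (U x) = U' (W x)) ∧ (∀ x : H, W (V x) = V' (W x))) := by
  simpa [Fin.forall_fin_two, hU, hV, hU', hV', isStarNormal_of_mem_unitary]
    using stmt_2_general ![U, V] ![U', V']
end

section
/- Let P_1, P_2, P_3 be orthogonal projections on a complex Hilbert space H with P_2P_3 = 0, and P̃_1, P̃_2, P̃_3 orthogonal projections on a complex Hilbert space H̃ with P̃_2P̃_3 = 0. Then the systems S_{P_1,P_2⊥P_3} and S_{P̃_1,P̃_2⊥P̃_3} are isomorphic (there is a bounded invertible R : H → H̃ mapping each of the five subspaces of the first system onto the corresponding subspace of the second) if and only if the triple (P_1,P_2,P_3) is unitarily equivalent to (P̃_1,P̃_2,P̃_3), i.e., there exists a unitary W : H → H̃ with WP_i = P̃_iW for i = 1, 2, 3. -/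
/-!
If `R` carries the range of each member of a finite family of operators summing to `1` into the
range of the corresponding member of a family of orthogonal idempotents, then `R` intertwines the
two families. If moreover all the operators are self-adjoint, then `R†` intertwines them in the
opposite direction; hence the operators on the source commute with `R† R`, and therefore with
`(R† R) ^ (-1/2)`, so that the unitary factor `R (R† R) ^ (-1/2)` of the polar decomposition of `R`
intertwines the two families as well.
-/

open ContinuousLinearMap Function Set

theorem orthogonalIdempotents_pair_of_isStarProjection {A : Type*} [Semiring A] [StarRing A]
    {p q : A} (hp : IsStarProjection p) (hq : IsStarProjection q) (hpq : p * q = 0) :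
    OrthogonalIdempotents ![p, q] := by
  have hqp : q * p = 0 := by
    rw [← star_eq_zero, star_mul, hp.isSelfAdjoint.star_eq, hq.isSelfAdjoint.star_eq, hpq]
  refine ⟨Fin.forall_fin_two.mpr ⟨hp.isIdempotentElem, hq.isIdempotentElem⟩, fun i j hij => ?_⟩
  fin_cases i <;> fin_cases j <;> simp_all

section Semiconj

theorem image_range_eq_of_semiconj {α β : Type*} {f : α → β} {g : α → α} {h : β → β}
    (hf : Surjective f) (hfg : Semiconj f g h) : f '' range g = range h := by
  rw [← range_comp, hfg.comp_eq, hf.range_comp]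

variable {A M N ι : Type*} [Fintype ι]

theorem semiconj_of_mapsTo_range [Semiring A]
    [AddCommMonoid M] [Module A M] [AddCommMonoid N] [Module A N]
    {P : ι → Module.End A M} {Q : ι → Module.End A N} (hP : ∑ i, P i = 1)
    (hQ : OrthogonalIdempotents Q) (R : M →ₗ[A] N)
    (hR : ∀ i, MapsTo R (range (P i)) (range (Q i))) (i : ι) :
    Semiconj R (P i) (Q i) := by
  classical
  have hQRP (j : ι) (x : M) : Q i (R (P j x)) = if i = j then R (P j x) else 0 := by
    obtain ⟨y, hy⟩ := hR j (mem_range_self x)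
    rw [← hy, ← Module.End.mul_apply, hQ.mul_eq]
    split_ifs with hij
    · rw [hij]
    · rfl
  intro x
  calc R (P i x) = ∑ j, Q i (R (P j x)) := by
        simp only [hQRP, Finset.sum_ite_eq, Finset.mem_univ, if_true]
    _ = Q i (R ((∑ j, P j) x)) := by simp only [LinearMap.sum_apply, map_sum]
    _ = Q i (R x) := by rw [hP, Module.End.one_apply]

variable [Ring A] [AddCommGroup M] [Module A M] [AddCommGroup N] [Module A N]
  {P : ι → Module.End A M} {Q : ι → Module.End A N}

theorem semiconj_one_sub_sum (R : M →ₗ[A] N) (hR : ∀ i, Semiconj R (P i) (Q i)) :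
    Semiconj R (1 - ∑ i, P i : Module.End A M) (1 - ∑ i, Q i : Module.End A N) := fun x => by
  simp [(hR _).eq]

theorem image_range_eq_iff_semiconj (hQ : OrthogonalIdempotents Q) (R : M ≃ₗ[A] N) :
    ((∀ i, R '' range (P i) = range (Q i)) ∧
      R '' range (1 - ∑ i, P i : Module.End A M) = range (1 - ∑ i, Q i : Module.End A N)) ↔
    ∀ i, Semiconj R (P i) (Q i) := by
  constructor
  · rintro ⟨hR, hR_compl⟩ i
    refine semiconj_of_mapsTo_range (P := fun o : Option ι => o.elim (1 - ∑ i, P i) P) (by simp)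
      (CompleteOrthogonalIdempotents.option hQ).toOrthogonalIdempotents R ?_ (some i)
    rintro (_ | j)
    · exact mapsTo_iff_image_subset.mpr hR_compl.subset
    · exact mapsTo_iff_image_subset.mpr (hR j).subset
  · exact fun hR => ⟨fun i => image_range_eq_of_semiconj R.surjective (hR i),
      image_range_eq_of_semiconj R.surjective (semiconj_one_sub_sum (R : M →ₗ[A] N) hR)⟩

theorem image_range_eq_iff_semiconj_continuousLinearMap
    [TopologicalSpace M] [IsTopologicalAddGroup M] [TopologicalSpace N] [IsTopologicalAddGroup N]
    {P : ι → M →L[A] M} {Q : ι → N →L[A] N} (hQ : OrthogonalIdempotents Q) (R : M ≃L[A] N) :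
    ((∀ i, R '' range (P i) = range (Q i)) ∧
      R '' range (1 - ∑ i, P i : M →L[A] M) = range (1 - ∑ i, Q i : N →L[A] N)) ↔
    ∀ i, Semiconj R (P i) (Q i) := by
  have h := image_range_eq_iff_semiconj (P := toLinearMapRingHom ∘ P)
    (hQ.map toLinearMapRingHom) R.toLinearEquiv
  simp only [comp_apply, ← map_sum, ← map_one toLinearMapRingHom, ← map_sub] at h
  exact h

end Semiconj

section Adjoint

variable {𝕜 E F : Type*} [RCLike 𝕜]
  [NormedAddCommGroup E] [InnerProductSpace 𝕜 E] [CompleteSpace E]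
  [NormedAddCommGroup F] [InnerProductSpace 𝕜 F] [CompleteSpace F]

theorem commute_adjoint_comp_self {T : E →L[𝕜] F} {P : E →L[𝕜] E} {Q : F →L[𝕜] F}
    (hT : Semiconj T P Q) (hT_adj : Semiconj T (adjoint P) (adjoint Q)) :
    Commute (adjoint T ∘L T) P := by
  have hTP : T ∘L P = Q ∘L T := ContinuousLinearMap.ext hT
  have hTP_adj : T ∘L adjoint P = adjoint Q ∘L T := ContinuousLinearMap.ext hT_adj
  have hPT : P ∘L adjoint T = adjoint T ∘L Q := by
    simpa only [adjoint_comp, adjoint_adjoint] using congrArg adjoint hTP_adj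
  calc (adjoint T ∘L T) ∘L P = adjoint T ∘L (Q ∘L T) := by
        rw [ContinuousLinearMap.comp_assoc, hTP]
    _ = P ∘L (adjoint T ∘L T) := by
        rw [← ContinuousLinearMap.comp_assoc, ← hPT, ContinuousLinearMap.comp_assoc]

theorem isUnit_adjoint_comp_self_s5 (R : E ≃L[𝕜] F) :
    IsUnit (adjoint (R : E →L[𝕜] F) ∘L (R : E →L[𝕜] F)) := by
  have hR_adj : adjoint (R : E →L[𝕜] F) ∘L adjoint (R.symm : F →L[𝕜] E) = .id 𝕜 E := by
    rw [← adjoint_comp, R.coe_symm_comp_coe, adjoint_id]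
  have hR_symm_adj : adjoint (R.symm : F →L[𝕜] E) ∘L adjoint (R : E →L[𝕜] F) = .id 𝕜 F := by
    rw [← adjoint_comp, R.coe_comp_coe_symm, adjoint_id]
  exact (R.trans (.equivOfInverse' _ _ hR_adj hR_symm_adj)).toUnit.isUnit

end Adjoint

section Polar

variable {H H' : Type*}
  [NormedAddCommGroup H] [InnerProductSpace ℂ H] [CompleteSpace H]
  [NormedAddCommGroup H'] [InnerProductSpace ℂ H'] [CompleteSpace H']

theorem isStrictlyPositive_adjoint_comp_self (R : H ≃L[ℂ] H') :
    IsStrictlyPositive (adjoint (R : H →L[ℂ] H') ∘L (R : H →L[ℂ] H')) :=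
  (isUnit_adjoint_comp_self_s5 R).isStrictlyPositive <|
    (nonneg_iff_isPositive _).mpr (isPositive_adjoint_comp_self _)

/-- The inverse `(R† R) ^ (-1/2)` of the positive factor in the polar decomposition of an
invertible operator `R`. -/
noncomputable def invAbs (R : H ≃L[ℂ] H') : H →L[ℂ] H :=
  (adjoint (R : H →L[ℂ] H') ∘L (R : H →L[ℂ] H')) ^ (-(1 / 2) : ℝ)

theorem isUnit_invAbs (R : H ≃L[ℂ] H') : IsUnit (invAbs R) :=
  (isUnit_adjoint_comp_self_s5 R).cfcRpow _ (isStrictlyPositive_adjoint_comp_self R).nonneg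

theorem adjoint_comp_self_comp_invAbs (R : H ≃L[ℂ] H') :
    adjoint ((R : H →L[ℂ] H') ∘L invAbs R) ∘L ((R : H →L[ℂ] H') ∘L invAbs R) = 1 := by
  have h_adj : adjoint (invAbs R) = invAbs R :=
    (IsSelfAdjoint.of_nonneg CFC.rpow_nonneg).adjoint_eq
  rw [adjoint_comp, h_adj]
  exact CFC.conjugate_rpow_neg_one_half _ (isStrictlyPositive_adjoint_comp_self R)

/-- The unitary factor `R (R† R) ^ (-1/2)` in the polar decomposition of an invertible
operator `R`. -/
noncomputable def unitaryPart (R : H ≃L[ℂ] H') : H ≃ₗᵢ[ℂ] H' :=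
  .ofSurjective
    (((R : H →L[ℂ] H') ∘L invAbs R).toLinearMap.isometryOfInner
      ((inner_map_map_iff_adjoint_comp_self _).mpr (adjoint_comp_self_comp_invAbs R)))
    (R.surjective.comp (isUnit_iff_bijective.mp (isUnit_invAbs R)).surjective)

theorem unitaryPart_apply (R : H ≃L[ℂ] H') (x : H) : unitaryPart R x = R (invAbs R x) := rfl

theorem semiconj_unitaryPart {R : H ≃L[ℂ] H'} {P : H →L[ℂ] H} {Q : H' →L[ℂ] H'}
    (hR : Semiconj R P Q) (hR_adj : Semiconj R (adjoint P) (adjoint Q)) :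
    Semiconj (unitaryPart R) P Q := fun x => by
  have h_comm : Commute (invAbs R) P :=
    (commute_adjoint_comp_self (T := (R : H →L[ℂ] H')) hR hR_adj).cfc_nnreal _
  have h_comm_apply : invAbs R (P x) = P (invAbs R x) := DFunLike.congr_fun h_comm.eq x
  rw [unitaryPart_apply, unitaryPart_apply, h_comm_apply, hR.eq]

end Polar

theorem stmt_5_general {κ : Type*} {ι : κ → Type*} [∀ k, Fintype (ι k)] {H H' : Type*}
    [NormedAddCommGroup H] [InnerProductSpace ℂ H] [CompleteSpace H]
    [NormedAddCommGroup H'] [InnerProductSpace ℂ H'] [CompleteSpace H']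
    (P : ∀ k, ι k → H →L[ℂ] H) (Q : ∀ k, ι k → H' →L[ℂ] H')
    (hP : ∀ k i, IsSelfAdjoint (P k i)) (hQ : ∀ k i, IsSelfAdjoint (Q k i))
    (hQ_orth : ∀ k, OrthogonalIdempotents (Q k)) :
    (∃ R : H ≃L[ℂ] H', ∀ k, (∀ i, R '' range (P k i) = range (Q k i)) ∧
      R '' range (1 - ∑ i, P k i : H →L[ℂ] H) = range (1 - ∑ i, Q k i : H' →L[ℂ] H')) ↔
    ∃ W : H ≃ₗᵢ[ℂ] H', ∀ k i, Semiconj W (P k i) (Q k i) := by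
  simp only [image_range_eq_iff_semiconj_continuousLinearMap (hQ_orth _)]
  refine ⟨fun ⟨R, hR⟩ => ⟨unitaryPart R, fun k i => semiconj_unitaryPart (hR k i) ?_⟩,
    fun ⟨W, hW⟩ => ⟨W.toContinuousLinearEquiv, hW⟩⟩
  rw [(hP k i).adjoint_eq, (hQ k i).adjoint_eq]
  exact hR k i

/-- `S_{P₁,P₂⊥P₃} ≅ S_{P̃₁,P̃₂⊥P̃₃}` iff the triple `(P₁,P₂,P₃)` is
unitarily equivalent to the triple `(P̃₁,P̃₂,P̃₃)`. -/
theorem stmt_5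
    {H H' : Type*}
    [NormedAddCommGroup H] [InnerProductSpace ℂ H] [CompleteSpace H]
    [NormedAddCommGroup H'] [InnerProductSpace ℂ H'] [CompleteSpace H']
    (P₁ P₂ P₃ : H →L[ℂ] H)
    (hP₁ : IsSelfAdjoint P₁ ∧ P₁ ∘L P₁ = P₁)
    (hP₂ : IsSelfAdjoint P₂ ∧ P₂ ∘L P₂ = P₂)
    (hP₃ : IsSelfAdjoint P₃ ∧ P₃ ∘L P₃ = P₃)
    (hP₂₃ : P₂ ∘L P₃ = 0)
    (Q₁ Q₂ Q₃ : H' →L[ℂ] H')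
    (hQ₁ : IsSelfAdjoint Q₁ ∧ Q₁ ∘L Q₁ = Q₁)
    (hQ₂ : IsSelfAdjoint Q₂ ∧ Q₂ ∘L Q₂ = Q₂)
    (hQ₃ : IsSelfAdjoint Q₃ ∧ Q₃ ∘L Q₃ = Q₃)
    (hQ₂₃ : Q₂ ∘L Q₃ = 0) :
    (∃ R : H ≃L[ℂ] H',
      (⇑R '' Set.range ⇑P₁ = Set.range ⇑Q₁) ∧
      (⇑R '' Set.range ⇑(1 - P₁) = Set.range ⇑(1 - Q₁)) ∧
      (⇑R '' Set.range ⇑P₂ = Set.range ⇑Q₂) ∧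
      (⇑R '' Set.range ⇑P₃ = Set.range ⇑Q₃) ∧
      (⇑R '' Set.range ⇑(1 - P₂ - P₃) = Set.range ⇑(1 - Q₂ - Q₃))) ↔
    (∃ W : H ≃ₗᵢ[ℂ] H',
      (∀ x : H, W (P₁ x) = Q₁ (W x)) ∧
      (∀ x : H, W (P₂ x) = Q₂ (W x)) ∧
      (∀ x : H, W (P₃ x) = Q₃ (W x))) := by
  -- The zero operators only pad the pair `P₁, 1 - P₁` to the shape of `P₂, P₃, 1 - P₂ - P₃`.
  simpa [Fin.forall_fin_two, Semiconj, sub_sub, and_assoc] using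
    stmt_5_general ![![P₁, 0], ![P₂, P₃]] ![![Q₁, 0], ![Q₂, Q₃]]
      (by simp [Fin.forall_fin_two, hP₁.1, hP₂.1, hP₃.1])
      (by simp [Fin.forall_fin_two, hQ₁.1, hQ₂.1, hQ₃.1])
      (Fin.forall_fin_two.mpr
        ⟨orthogonalIdempotents_pair_of_isStarProjection ⟨hQ₁.2, hQ₁.1⟩ (.zero _) (mul_zero Q₁),
          orthogonalIdempotents_pair_of_isStarProjection ⟨hQ₂.2, hQ₂.1⟩ ⟨hQ₃.2, hQ₃.1⟩ hQ₂₃⟩)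
end

section
/- Let H, H̃, Ĥ, H̃̂ be complex Hilbert spaces and α > 1 a real number. Let P_1,…,P_n be orthogonal projections on H with ΣP_i = αI_H and P̃_1,…,P̃_n orthogonal projections on H̃ with ΣP̃_i = αI_{H̃}; let Γ_i : range P_i → H and Γ̃_i : range P̃_i → H̃ be the inclusion isometries. Let Δ_i : range P_i → Ĥ satisfy Δ_i*Δ_i = I, Σ_{i=1}^n Γ_iΔ_i* = 0, and Δ_i*Δ_j = −(1/(α−1))Γ_i*Γ_j for i ≠ j, and let Δ̃_i : range P̃_i → H̃̂ satisfy the analogous relations. Suppose C : H → H̃ is bounded with CP_i = P̃_iCP_i for all i, set C_i = Γ̃_i*CΓ_i and Ĉ = ((α−1)/α) Σ_{i=1}^n Δ̃_iC_iΔ_i*. Then Δ̃_k*Ĉ = C_kΔ_k* for every k = 1,…,n. -/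
/-!
Put `A_i = C_i Δ_i*`. Since `C` maps `range Γ_i` into `range Γ̃_i`, one has `Γ̃_i C_i = C Γ_i`, so
`Σ Γ̃_i A_i = C Σ Γ_i Δ_i* = 0`. The off-diagonal relations turn the terms `i ≠ k` of
`Σ Δ̃_k* Δ̃_i A_i` into `-(α-1)⁻¹ Γ̃_k* Γ̃_i A_i`, and these add up to `(α-1)⁻¹ Γ̃_k* Γ̃_k A_k =
(α-1)⁻¹ A_k`. With the diagonal term the total is `(1 + (α-1)⁻¹) A_k = (α/(α-1)) A_k`.
-/

section TopologicalModule

variable {R X E H : Type*} [Semiring R]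
  [AddCommMonoid X] [TopologicalSpace X] [Module R X]
  [AddCommMonoid E] [TopologicalSpace E] [Module R E]
  [AddCommMonoid H] [TopologicalSpace H] [Module R H]

theorem comp_sum_comp_add_eq_of_sum_comp_eq_zero [ContinuousAdd E] [ContinuousAdd H]
    {ι : Type*} [Fintype ι] {K : ι → Type*}
    [∀ i, AddCommMonoid (K i)] [∀ i, TopologicalSpace (K i)] [∀ i, Module R (K i)]
    {k : ι} [ContinuousAdd (K k)] {Δ : ∀ i, K i →L[R] E} {Γ : ∀ i, K i →L[R] H}
    {A : ∀ i, X →L[R] K i} {S : E →L[R] K k} {T : H →L[R] K k} (hdiag : S ∘L Δ k = 1)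
    (hoff : ∀ i, i ≠ k → S ∘L Δ i = T ∘L Γ i) (hA : ∑ i, Γ i ∘L A i = 0) :
    S ∘L ∑ i, Δ i ∘L A i + T ∘L Γ k ∘L A k = A k := by
  classical
  have hdiag' : (S ∘L Δ k) ∘L A k = A k := by
    rw [hdiag, ContinuousLinearMap.one_def, ContinuousLinearMap.id_comp]
  have hoff' : ∀ i ∈ ({k}ᶜ : Finset ι), (S ∘L Δ i) ∘L A i = (T ∘L Γ i) ∘L A i := by
    intro i hi
    rw [hoff i (by simpa using hi)]
  calc S ∘L ∑ i, Δ i ∘L A i + T ∘L Γ k ∘L A k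
      = (S ∘L Δ k) ∘L A k + ∑ i ∈ {k}ᶜ, (S ∘L Δ i) ∘L A i + (T ∘L Γ k) ∘L A k := by
        rw [ContinuousLinearMap.comp_finsetSum, Fintype.sum_eq_add_sum_compl k]
        simp only [ContinuousLinearMap.comp_assoc]
    _ = A k + ∑ i ∈ {k}ᶜ, (T ∘L Γ i) ∘L A i + (T ∘L Γ k) ∘L A k := by
        rw [hdiag', Finset.sum_congr rfl hoff']
    _ = A k + T ∘L ∑ i, Γ i ∘L A i := by
        rw [ContinuousLinearMap.comp_finsetSum, Fintype.sum_eq_add_sum_compl k, add_assoc,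
          add_comm (∑ i ∈ {k}ᶜ, _)]
        simp only [ContinuousLinearMap.comp_assoc]
    _ = A k := by rw [hA, ContinuousLinearMap.comp_zero, add_zero]

theorem comp_eq_comp_comp_of_leftInverse
    {G : X →L[R] H} {S : H →L[R] X} {C : H →L[R] E} {Q : E →L[R] E} (hSG : S ∘L G = 1)
    (hC : C ∘L G ∘L S = Q ∘L C ∘L G ∘L S) :
    C ∘L G = Q ∘L C ∘L G := by
  have hGSG : G ∘L S ∘L G = G := by
    rw [hSG, ContinuousLinearMap.one_def, ContinuousLinearMap.comp_id]
  simpa only [ContinuousLinearMap.comp_assoc, hGSG] using congrArg (· ∘L G) hC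

end TopologicalModule

open ContinuousLinearMap in
theorem stmt_7_general
    {𝕜 ι H H' E E' : Type*} [RCLike 𝕜] [Fintype ι]
    [NormedAddCommGroup H] [NormedSpace 𝕜 H]
    [NormedAddCommGroup H'] [InnerProductSpace 𝕜 H'] [CompleteSpace H']
    [NormedAddCommGroup E] [InnerProductSpace 𝕜 E] [CompleteSpace E]
    [NormedAddCommGroup E'] [InnerProductSpace 𝕜 E'] [CompleteSpace E']
    {K K' : ι → Type*}
    [∀ i, NormedAddCommGroup (K i)] [∀ i, InnerProductSpace 𝕜 (K i)] [∀ i, CompleteSpace (K i)]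
    [∀ i, NormedAddCommGroup (K' i)] [∀ i, InnerProductSpace 𝕜 (K' i)] [∀ i, CompleteSpace (K' i)]
    {α : 𝕜} (hα₀ : α ≠ 0) (hα₁ : α ≠ 1)
    {Γ : ∀ i, K i →L[𝕜] H} {Γ' : ∀ i, K' i →L[𝕜] H'}
    {Δ : ∀ i, K i →L[𝕜] E} (hΓΔ : ∑ i, Γ i ∘L adjoint (Δ i) = 0)
    {Δ' : ∀ i, K' i →L[𝕜] E'} (hdiag : ∀ i, adjoint (Δ' i) ∘L Δ' i = 1)
    (hoff : ∀ i j, i ≠ j →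
      adjoint (Δ' i) ∘L Δ' j = (-(α - 1)⁻¹) • (adjoint (Γ' i) ∘L Γ' j))
    {C : H →L[𝕜] H'} (hC : ∀ i, C ∘L Γ i = (Γ' i ∘L adjoint (Γ' i)) ∘L C ∘L Γ i) (k : ι) :
    adjoint (Δ' k) ∘L
        (((α - 1) / α) •
          ∑ i, Δ' i ∘L (adjoint (Γ' i) ∘L C ∘L Γ i) ∘L adjoint (Δ i)) =
      (adjoint (Γ' k) ∘L C ∘L Γ k) ∘L adjoint (Δ k) := by
  set A := fun i ↦ (adjoint (Γ' i) ∘L C ∘L Γ i) ∘L adjoint (Δ i)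
  have hΓA (i : ι) : Γ' i ∘L A i = C ∘L Γ i ∘L adjoint (Δ i) :=
    (congrArg (· ∘L adjoint (Δ i)) (hC i)).symm
  have hsum : ∑ i, Γ' i ∘L A i = 0 := by
    simp only [hΓA, ← comp_finsetSum, hΓΔ, comp_zero]
  have hproj : adjoint (Γ' k) ∘L Γ' k ∘L A k = A k := by
    rw [hΓA]
    simp only [A, comp_assoc]
  have hα : α - 1 ≠ 0 := sub_ne_zero.mpr hα₁
  have hkey : adjoint (Δ' k) ∘L ∑ i, Δ' i ∘L A i + (-(α - 1)⁻¹) • A k = A k := by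
    have h := comp_sum_comp_add_eq_of_sum_comp_eq_zero (T := (-(α - 1)⁻¹) • adjoint (Γ' k))
      (hdiag k) (fun i hik ↦ by rw [hoff k i hik.symm, smul_comp]) hsum
    rwa [smul_comp, hproj] at h
  have hscalar : (α - 1) / α * (1 + (α - 1)⁻¹) = 1 := by
    field_simp
    ring
  calc adjoint (Δ' k) ∘L (((α - 1) / α) • ∑ i, Δ' i ∘L A i)
      = ((α - 1) / α) • (A k - (-(α - 1)⁻¹) • A k) := by
        rw [comp_smul, eq_sub_of_add_eq hkey]
    _ = ((α - 1) / α * (1 + (α - 1)⁻¹)) • A k := by module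
    _ = A k := by rw [hscalar, one_smul]

open ContinuousLinearMap in
/-- In the Coxeter-functor setup, with `C_i = Γ̃_i*CΓ_i` and
`Ĉ = ((α−1)/α) Σ Δ̃_i C_i Δ_i*`, one has `Δ̃_k* Ĉ = C_k Δ_k*` for every `k`. -/
theorem stmt_7
    {n : ℕ} {H H' E E' : Type*}
    [NormedAddCommGroup H] [InnerProductSpace ℂ H] [CompleteSpace H]
    [NormedAddCommGroup H'] [InnerProductSpace ℂ H'] [CompleteSpace H']
    [NormedAddCommGroup E] [InnerProductSpace ℂ E] [CompleteSpace E]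
    [NormedAddCommGroup E'] [InnerProductSpace ℂ E'] [CompleteSpace E']
    {K K' : Fin n → Type*}
    [∀ i, NormedAddCommGroup (K i)] [∀ i, InnerProductSpace ℂ (K i)] [∀ i, CompleteSpace (K i)]
    [∀ i, NormedAddCommGroup (K' i)] [∀ i, InnerProductSpace ℂ (K' i)] [∀ i, CompleteSpace (K' i)]
    (α : ℝ) (hα : 1 < α)
    (P : Fin n → H →L[ℂ] H)
    (hPsa : ∀ i, IsSelfAdjoint (P i)) (hPidem : ∀ i, P i ∘L P i = P i)
    (hPsum : ∑ i, P i = (α : ℂ) • (1 : H →L[ℂ] H))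
    (P' : Fin n → H' →L[ℂ] H')
    (hP'sa : ∀ i, IsSelfAdjoint (P' i)) (hP'idem : ∀ i, P' i ∘L P' i = P' i)
    (hP'sum : ∑ i, P' i = (α : ℂ) • (1 : H' →L[ℂ] H'))
    (Γ : ∀ i, K i →L[ℂ] H)
    (hΓ₁ : ∀ i, adjoint (Γ i) ∘L Γ i = 1) (hΓ₂ : ∀ i, Γ i ∘L adjoint (Γ i) = P i)
    (Γ' : ∀ i, K' i →L[ℂ] H')
    (hΓ'₁ : ∀ i, adjoint (Γ' i) ∘L Γ' i = 1) (hΓ'₂ : ∀ i, Γ' i ∘L adjoint (Γ' i) = P' i)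
    (Δ : ∀ i, K i →L[ℂ] E)
    (hΔ₁ : ∀ i, adjoint (Δ i) ∘L Δ i = 1)
    (hΔ₂ : ∑ i, Γ i ∘L adjoint (Δ i) = 0)
    (hΔ₃ : ∀ i j, i ≠ j →
      adjoint (Δ i) ∘L Δ j = (-((α : ℂ) - 1)⁻¹) • (adjoint (Γ i) ∘L Γ j))
    (Δ' : ∀ i, K' i →L[ℂ] E')
    (hΔ'₁ : ∀ i, adjoint (Δ' i) ∘L Δ' i = 1)
    (hΔ'₂ : ∑ i, Γ' i ∘L adjoint (Δ' i) = 0)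
    (hΔ'₃ : ∀ i j, i ≠ j →
      adjoint (Δ' i) ∘L Δ' j = (-((α : ℂ) - 1)⁻¹) • (adjoint (Γ' i) ∘L Γ' j))
    (C : H →L[ℂ] H')
    (hC : ∀ i, C ∘L P i = P' i ∘L (C ∘L P i)) :
    ∀ k, adjoint (Δ' k) ∘L
        ((((α : ℂ) - 1) / (α : ℂ)) •
          ∑ i, Δ' i ∘L (adjoint (Γ' i) ∘L C ∘L Γ i) ∘L adjoint (Δ i)) =
      (adjoint (Γ' k) ∘L C ∘L Γ k) ∘L adjoint (Δ k) := by
  have hα₀ : (α : ℂ) ≠ 0 := by exact_mod_cast (zero_lt_one.trans hα).ne'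
  have hα₁ : (α : ℂ) ≠ 1 := by exact_mod_cast hα.ne'
  exact stmt_7_general hα₀ hα₁ hΔ₂ hΔ'₁ hΔ'₃ fun i ↦
    comp_eq_comp_comp_of_leftInverse (hΓ₁ i) (by simpa only [hΓ₂, hΓ'₂] using hC i)
end

section
/- Let H, H̃, Ĥ, H̃̂ be complex Hilbert spaces and α > 1 a real number. Let P_1,…,P_n be orthogonal projections on H with ΣP_i = αI_H and P̃_1,…,P̃_n orthogonal projections on H̃ with ΣP̃_i = αI_{H̃}; let Γ_i, Γ̃_i be the respective inclusion isometries of the ranges. Let Δ_i : range P_i → Ĥ and Δ̃_i : range P̃_i → H̃̂ satisfy Δ_i*Δ_i = I, Σ_i Γ_iΔ_i* = 0, Δ_i*Δ_j = −(1/(α−1))Γ_i*Γ_j for i ≠ j, and the analogous tilde relations. Suppose C : H → H̃ is bounded with CP_i = P̃_iCP_i for all i, set C_i = Γ̃_i*CΓ_i and Ĉ = ((α−1)/α) Σ_i Δ̃_iC_iΔ_i*. Then C_k = Δ̃_k*ĈΔ_k for every k = 1,…,n. -/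
/-!
The Gram relations between the `Δ̃ᵢ` and the `Γ̃ᵢ` give `Δ̃ₖ* (∑ᵢ Δ̃ᵢ vᵢ) = (α / (α - 1)) vₖ` for
every family of vectors `vᵢ` with `∑ᵢ Γ̃ᵢ vᵢ = 0`. The family `vᵢ = Cᵢ Δᵢ* y` is of this kind,
because `Γ̃ᵢ Cᵢ = C Γᵢ` and `∑ᵢ Γᵢ Δᵢ* = 0`. Hence `Δ̃ₖ* Ĉ = Cₖ Δₖ*`, and composing with `Δₖ`
gives the claim.
-/

section Retraction

open ContinuousLinearMap

variable {R H H' K K' : Type*} [Semiring R]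
  [TopologicalSpace H] [AddCommMonoid H] [Module R H]
  [TopologicalSpace H'] [AddCommMonoid H'] [Module R H']
  [TopologicalSpace K] [AddCommMonoid K] [Module R K]
  [TopologicalSpace K'] [AddCommMonoid K'] [Module R K']

theorem comp_section_eq_of_comp_idempotent_eq {s : K →L[R] H} {r : H →L[R] K}
    {s' : K' →L[R] H'} {r' : H' →L[R] K'} {C : H →L[R] H'} (hrs : r ∘L s = 1)
    (hC : C ∘L (s ∘L r) = (s' ∘L r') ∘L (C ∘L (s ∘L r))) :
    C ∘L s = s' ∘L (r' ∘L C ∘L s) := by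
  have hs : (s ∘L r) ∘L s = s := by
    rw [comp_assoc, hrs, one_def, comp_id]
  calc C ∘L s = (C ∘L (s ∘L r)) ∘L s := by rw [comp_assoc, hs]
    _ = ((s' ∘L r') ∘L (C ∘L (s ∘L r))) ∘L s := congrArg (· ∘L s) hC
    _ = s' ∘L (r' ∘L C ∘L s) := by simp only [comp_assoc, hs]

end Retraction

section GramRelations

open ContinuousLinearMap

variable {ι : Type*} [Fintype ι]

theorem comp_sum_comp_eq_one_sub_smul_of_gram {R F H E : Type*} {K : ι → Type*} [CommRing R]
    [TopologicalSpace F] [AddCommGroup F] [Module R F]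
    [TopologicalSpace H] [AddCommGroup H] [Module R H] [ContinuousAdd H]
    [TopologicalSpace E] [AddCommGroup E] [Module R E] [ContinuousAdd E]
    [∀ i, TopologicalSpace (K i)] [∀ i, AddCommGroup (K i)] [∀ i, Module R (K i)]
    [∀ i, IsTopologicalAddGroup (K i)] [∀ i, ContinuousConstSMul R (K i)]
    {γ : ∀ i, K i →L[R] H} {δ : ∀ i, K i →L[R] E} {T : ∀ i, F →L[R] K i}
    {c : R} {k : ι} {q : H →L[R] K k} {p : E →L[R] K k}
    (hq : q ∘L γ k = 1) (hp : p ∘L δ k = 1)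
    (hgram : ∀ i, i ≠ k → p ∘L δ i = c • (q ∘L γ i)) (hT : ∑ i, γ i ∘L T i = 0) :
    p ∘L (∑ i, δ i ∘L T i) = (1 - c) • T k := by
  calc p ∘L (∑ i, δ i ∘L T i)
      = p ∘L (∑ i, δ i ∘L T i) - c • (q ∘L (∑ i, γ i ∘L T i)) := by
        rw [hT, comp_zero, smul_zero, sub_zero]
    _ = ∑ i, (p ∘L δ i - c • (q ∘L γ i)) ∘L T i := by
        simp only [comp_finsetSum, Finset.smul_sum, sub_comp, smul_comp,
          Finset.sum_sub_distrib, comp_assoc]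
    _ = (p ∘L δ k - c • (q ∘L γ k)) ∘L T k :=
        Fintype.sum_eq_single k fun i hi ↦ by rw [hgram i hi, sub_self, zero_comp]
    _ = (1 - c) • T k := by
        rw [hq, hp, sub_comp, smul_comp, one_def, id_comp, sub_smul, one_smul]

/-- The maps `D i`, `q' i`, `p i`, `p' i` play the roles of `Cᵢ`, `Γ̃ᵢ*`, `Δᵢ*`, `Δ̃ᵢ*`. -/
theorem stmt_8_general {𝕜 H H' E E' : Type*} {K K' : ι → Type*} [Field 𝕜]
    [TopologicalSpace H] [AddCommGroup H] [Module 𝕜 H] [ContinuousAdd H]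
    [TopologicalSpace H'] [AddCommGroup H'] [Module 𝕜 H'] [ContinuousAdd H']
    [TopologicalSpace E] [AddCommGroup E] [Module 𝕜 E]
    [TopologicalSpace E'] [AddCommGroup E'] [Module 𝕜 E'] [ContinuousAdd E']
    [ContinuousConstSMul 𝕜 E']
    [∀ i, TopologicalSpace (K i)] [∀ i, AddCommGroup (K i)] [∀ i, Module 𝕜 (K i)]
    [∀ i, TopologicalSpace (K' i)] [∀ i, AddCommGroup (K' i)] [∀ i, Module 𝕜 (K' i)]
    [∀ i, IsTopologicalAddGroup (K' i)] [∀ i, ContinuousConstSMul 𝕜 (K' i)]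
    {α : 𝕜} (hα₀ : α ≠ 0) (hα₁ : α ≠ 1)
    {γ : ∀ i, K i →L[𝕜] H} {δ : ∀ i, K i →L[𝕜] E} {p : ∀ i, E →L[𝕜] K i}
    (hp : ∀ i, p i ∘L δ i = 1) (hγp : ∑ i, γ i ∘L p i = 0)
    {γ' : ∀ i, K' i →L[𝕜] H'} {q' : ∀ i, H' →L[𝕜] K' i}
    {δ' : ∀ i, K' i →L[𝕜] E'} {p' : ∀ i, E' →L[𝕜] K' i}
    (hq' : ∀ i, q' i ∘L γ' i = 1) (hp' : ∀ i, p' i ∘L δ' i = 1)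
    (hgram : ∀ i j, i ≠ j → p' i ∘L δ' j = (-(α - 1)⁻¹) • (q' i ∘L γ' j))
    {C : H →L[𝕜] H'} {D : ∀ i, K i →L[𝕜] K' i} (hD : ∀ i, C ∘L γ i = γ' i ∘L D i) (k : ι) :
    D k = p' k ∘L (((α - 1) / α) • ∑ i, δ' i ∘L D i ∘L p i) ∘L δ k := by
  have hα_sub : α - 1 ≠ 0 := sub_ne_zero.mpr hα₁
  have hscalar : (α - 1) / α * (1 - -(α - 1)⁻¹) = 1 := by
    field_simp
    ring
  have hsum : ∑ i, γ' i ∘L D i ∘L p i = 0 := by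
    simp only [← comp_assoc, ← hD]
    simp only [comp_assoc, ← comp_finsetSum, hγp, comp_zero]
  have hcoord : p' k ∘L (∑ i, δ' i ∘L D i ∘L p i) = (1 - -(α - 1)⁻¹) • (D k ∘L p k) :=
    comp_sum_comp_eq_one_sub_smul_of_gram (hq' k) (hp' k) (fun i hi ↦ hgram k i hi.symm) hsum
  have hinter : p' k ∘L (((α - 1) / α) • ∑ i, δ' i ∘L D i ∘L p i) = D k ∘L p k := by
    rw [comp_smul, hcoord, smul_smul, hscalar, one_smul]
  rw [← comp_assoc, hinter, comp_assoc, hp, one_def, comp_id]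

end GramRelations

open ContinuousLinearMap in
/-- In the Coxeter-functor setup, `C_k = Δ̃_k* Chat Δ_k` for every `k`. -/
theorem stmt_8
    {n : ℕ} {H H' E E' : Type*}
    [NormedAddCommGroup H] [InnerProductSpace ℂ H] [CompleteSpace H]
    [NormedAddCommGroup H'] [InnerProductSpace ℂ H'] [CompleteSpace H']
    [NormedAddCommGroup E] [InnerProductSpace ℂ E] [CompleteSpace E]
    [NormedAddCommGroup E'] [InnerProductSpace ℂ E'] [CompleteSpace E']
    {K K' : Fin n → Type*}
    [∀ i, NormedAddCommGroup (K i)] [∀ i, InnerProductSpace ℂ (K i)] [∀ i, CompleteSpace (K i)]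
    [∀ i, NormedAddCommGroup (K' i)] [∀ i, InnerProductSpace ℂ (K' i)] [∀ i, CompleteSpace (K' i)]
    (α : ℝ) (hα : 1 < α)
    (P : Fin n → H →L[ℂ] H)
    (hPsa : ∀ i, IsSelfAdjoint (P i)) (hPidem : ∀ i, P i ∘L P i = P i)
    (hPsum : ∑ i, P i = (α : ℂ) • (1 : H →L[ℂ] H))
    (P' : Fin n → H' →L[ℂ] H')
    (hP'sa : ∀ i, IsSelfAdjoint (P' i)) (hP'idem : ∀ i, P' i ∘L P' i = P' i)
    (hP'sum : ∑ i, P' i = (α : ℂ) • (1 : H' →L[ℂ] H'))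
    (Γ : ∀ i, K i →L[ℂ] H)
    (hΓ₁ : ∀ i, adjoint (Γ i) ∘L Γ i = 1) (hΓ₂ : ∀ i, Γ i ∘L adjoint (Γ i) = P i)
    (Γ' : ∀ i, K' i →L[ℂ] H')
    (hΓ'₁ : ∀ i, adjoint (Γ' i) ∘L Γ' i = 1) (hΓ'₂ : ∀ i, Γ' i ∘L adjoint (Γ' i) = P' i)
    (Δ : ∀ i, K i →L[ℂ] E)
    (hΔ₁ : ∀ i, adjoint (Δ i) ∘L Δ i = 1)
    (hΔ₂ : ∑ i, Γ i ∘L adjoint (Δ i) = 0)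
    (hΔ₃ : ∀ i j, i ≠ j →
      adjoint (Δ i) ∘L Δ j = (-((α : ℂ) - 1)⁻¹) • (adjoint (Γ i) ∘L Γ j))
    (Δ' : ∀ i, K' i →L[ℂ] E')
    (hΔ'₁ : ∀ i, adjoint (Δ' i) ∘L Δ' i = 1)
    (hΔ'₂ : ∑ i, Γ' i ∘L adjoint (Δ' i) = 0)
    (hΔ'₃ : ∀ i j, i ≠ j →
      adjoint (Δ' i) ∘L Δ' j = (-((α : ℂ) - 1)⁻¹) • (adjoint (Γ' i) ∘L Γ' j))
    (C : H →L[ℂ] H')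
    (hC : ∀ i, C ∘L P i = P' i ∘L (C ∘L P i))
    (Chat : E →L[ℂ] E')
    (hChat : Chat = (((α : ℂ) - 1) / (α : ℂ)) •
      ∑ i, Δ' i ∘L (adjoint (Γ' i) ∘L C ∘L Γ i) ∘L adjoint (Δ i)) :
    ∀ k, adjoint (Γ' k) ∘L C ∘L Γ k = adjoint (Δ' k) ∘L Chat ∘L Δ k := by
  subst hChat
  exact stmt_8_general (by exact_mod_cast (zero_lt_one.trans hα).ne') (by exact_mod_cast hα.ne')
    hΔ₁ hΔ₂ hΓ'₁ hΔ'₁ hΔ'₃ fun i ↦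
      comp_section_eq_of_comp_idempotent_eq (hΓ₁ i) (by simpa only [hΓ₂, hΓ'₂] using hC i)
end

section
/- Under the hypotheses of the Coxeter-functor setup (orthogonal projections P_i on H with ΣP_i = αI_H, α > 1, projections P̃_i on H̃ with ΣP̃_i = αI_{H̃}, inclusion isometries Γ_i, Γ̃_i, and operators Δ_i, Δ̃_i satisfying Δ_i*Δ_i = I, Σ_iΓ_iΔ_i* = 0, Δ_i*Δ_j = −(1/(α−1))Γ_i*Γ_j for i ≠ j, together with the tilde analogues), let C : H → H̃ be bounded with CP_i = P̃_iCP_i for all i, C_i = Γ̃_i*CΓ_i, Ĉ = ((α−1)/α)Σ_iΔ̃_iC_iΔ_i*, and set Q_k = Δ_kΔ_k*, Q̃_k = Δ̃_kΔ̃_k*. Then Q̃_kĈ = Q̃_kĈQ_k for all k = 1,…,n; equivalently, Ĉ*Q̃_k = Q_kĈ*Q̃_k for all k, so Ĉ* intertwines the projection families (Q̃_k) and (Q_k). -/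
/-!
For `i ≠ k` the relation `Δ'_k* Δ'_i = β Γ'_k* Γ'_i` says that `Δ'_k*` sees `Δ'_i` as `β Γ'_k*`
sees `Γ'_i`. Let `C` restrict to maps `D_i`, that is, `Γ'_i D_i = C Γ_i`. Compare
`Δ'_k* ∑ Δ'_i D_i Δ_i*` with `β Γ'_k* ∑ Γ'_i D_i Δ_i* = β Γ'_k* C ∑ Γ_i Δ_i* = 0` term by term:
only the `k`-th terms differ, so the first expression factors on the right through `Δ_k*`, which
absorbs the projection `Δ_k Δ_k*`. For isometries and `β = -1/(α - 1)` that factorization is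
`Δ'_k* ∑ Δ'_i D_i Δ_i* = α/(α - 1) D_k Δ_k*`, which explains the normalization `(α - 1)/α` of `Ĉ`.
-/

section TopologicalModule

open ContinuousLinearMap

variable {R M M' : Type*} [Ring R]
  [AddCommGroup M] [TopologicalSpace M] [Module R M]
  [AddCommGroup M'] [TopologicalSpace M'] [Module R M']

lemma comp_compression_eq_comp_of_leftInverse {K K' : Type*}
    [AddCommGroup K] [TopologicalSpace K] [Module R K]
    [AddCommGroup K'] [TopologicalSpace K'] [Module R K']
    {Γ : K →L[R] M} {S : M →L[R] K} {Γ' : K' →L[R] M'} {S' : M' →L[R] K'} {C : M →L[R] M'}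
    (hS : S ∘L Γ = 1) (hC : C ∘L (Γ ∘L S) = (Γ' ∘L S') ∘L (C ∘L (Γ ∘L S))) :
    Γ' ∘L (S' ∘L C ∘L Γ) = C ∘L Γ := by
  ext x
  have hx : S (Γ x) = x := DFunLike.congr_fun hS x
  simpa [hx] using (DFunLike.congr_fun hC (Γ x)).symm

lemma sum_comp_comp_eq_zero_of_comp_eq_comp {ι N : Type*} [Fintype ι] {K K' : ι → Type*}
    [IsTopologicalAddGroup M] [IsTopologicalAddGroup M']
    [AddCommGroup N] [TopologicalSpace N] [Module R N]
    [∀ i, AddCommGroup (K i)] [∀ i, TopologicalSpace (K i)] [∀ i, Module R (K i)]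
    [∀ i, AddCommGroup (K' i)] [∀ i, TopologicalSpace (K' i)] [∀ i, Module R (K' i)]
    {Γ : ∀ i, K i →L[R] M} {Γ' : ∀ i, K' i →L[R] M'} {C : M →L[R] M'}
    {D : ∀ i, K i →L[R] K' i} {S : ∀ i, N →L[R] K i}
    (hD : ∀ i, Γ' i ∘L D i = C ∘L Γ i) (hS : ∑ i, Γ i ∘L S i = 0) :
    ∑ i, Γ' i ∘L D i ∘L S i = 0 :=
  calc ∑ i, Γ' i ∘L D i ∘L S i
      = ∑ i, C ∘L (Γ i ∘L S i) :=
        Finset.sum_congr rfl fun i _ => congrArg (· ∘L S i) (hD i)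
    _ = C ∘L ∑ i, Γ i ∘L S i := (comp_finsetSum _ _).symm
    _ = 0 := by rw [hS, comp_zero]

lemma comp_sum_comp_eq_sub_comp {ι N N' L : Type*} [Fintype ι] {K : ι → Type*}
    [IsTopologicalAddGroup M']
    [AddCommGroup N] [TopologicalSpace N] [Module R N]
    [AddCommGroup N'] [TopologicalSpace N'] [Module R N'] [IsTopologicalAddGroup N']
    [AddCommGroup L] [TopologicalSpace L] [Module R L] [IsTopologicalAddGroup L]
    [∀ i, AddCommGroup (K i)] [∀ i, TopologicalSpace (K i)] [∀ i, Module R (K i)]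
    {Γ : ∀ i, K i →L[R] M'} {Δ : ∀ i, K i →L[R] N'} {T : ∀ i, N →L[R] K i}
    {A : N' →L[R] L} {B : M' →L[R] L} {k : ι}
    (hAB : ∀ i, i ≠ k → A ∘L Δ i = B ∘L Γ i) (hT : ∑ i, Γ i ∘L T i = 0) :
    A ∘L ∑ i, Δ i ∘L T i = (A ∘L Δ k - B ∘L Γ k) ∘L T k :=
  calc A ∘L ∑ i, Δ i ∘L T i
      = A ∘L ∑ i, Δ i ∘L T i - B ∘L ∑ i, Γ i ∘L T i := by rw [hT, comp_zero, sub_zero]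
    _ = ∑ i, (A ∘L Δ i - B ∘L Γ i) ∘L T i := by
        simp only [comp_finsetSum, sub_comp, comp_assoc, Finset.sum_sub_distrib]
    _ = (A ∘L Δ k - B ∘L Γ k) ∘L T k :=
        Fintype.sum_eq_single k fun i hi => by rw [hAB i hi, sub_self, zero_comp]

end TopologicalModule

section Adjoint

open ContinuousLinearMap

variable {𝕜 E E' : Type*} [RCLike 𝕜]
  [NormedAddCommGroup E] [InnerProductSpace 𝕜 E] [CompleteSpace E]
  [NormedAddCommGroup E'] [InnerProductSpace 𝕜 E'] [CompleteSpace E']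

lemma comp_eq_comp_comp_iff_adjoint {Q : E →L[𝕜] E} {Q' : E' →L[𝕜] E'}
    (hQ : IsSelfAdjoint Q) (hQ' : IsSelfAdjoint Q') (T : E →L[𝕜] E') :
    Q' ∘L T = Q' ∘L T ∘L Q ↔ adjoint T ∘L Q' = Q ∘L adjoint T ∘L Q' := by
  rw [← adjoint.injective.eq_iff]
  simp only [adjoint_comp, hQ.adjoint_eq, hQ'.adjoint_eq, comp_assoc]

theorem stmt_9_general {ι H H' : Type*} [Fintype ι] {K K' : ι → Type*}
    [NormedAddCommGroup H] [NormedSpace 𝕜 H]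
    [NormedAddCommGroup H'] [InnerProductSpace 𝕜 H'] [CompleteSpace H']
    [∀ i, NormedAddCommGroup (K i)] [∀ i, InnerProductSpace 𝕜 (K i)] [∀ i, CompleteSpace (K i)]
    [∀ i, NormedAddCommGroup (K' i)] [∀ i, InnerProductSpace 𝕜 (K' i)] [∀ i, CompleteSpace (K' i)]
    {β c : 𝕜} {Γ : ∀ i, K i →L[𝕜] H} {Γ' : ∀ i, K' i →L[𝕜] H'}
    {Δ : ∀ i, K i →L[𝕜] E} {Δ' : ∀ i, K' i →L[𝕜] E'}
    (hΔ : ∀ i, adjoint (Δ i) ∘L Δ i = 1) (hΓΔ : ∑ i, Γ i ∘L adjoint (Δ i) = 0)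
    (hΔ' : ∀ i j, i ≠ j → adjoint (Δ' i) ∘L Δ' j = β • (adjoint (Γ' i) ∘L Γ' j))
    {C : H →L[𝕜] H'} {D : ∀ i, K i →L[𝕜] K' i} (hD : ∀ i, Γ' i ∘L D i = C ∘L Γ i)
    {Chat : E →L[𝕜] E'} (hChat : Chat = c • ∑ i, Δ' i ∘L D i ∘L adjoint (Δ i)) :
    (∀ k, (Δ' k ∘L adjoint (Δ' k)) ∘L Chat =
      (Δ' k ∘L adjoint (Δ' k)) ∘L Chat ∘L (Δ k ∘L adjoint (Δ k))) ∧
    (∀ k, adjoint Chat ∘L (Δ' k ∘L adjoint (Δ' k)) =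
      (Δ k ∘L adjoint (Δ k)) ∘L adjoint Chat ∘L (Δ' k ∘L adjoint (Δ' k))) := by
  have adjoint_comp_Chat_factors (k) : ∃ X : K k →L[𝕜] K' k,
      adjoint (Δ' k) ∘L Chat = X ∘L adjoint (Δ k) := by
    have hΓ'D := sum_comp_comp_eq_zero_of_comp_eq_comp hD hΓΔ
    have hsum := comp_sum_comp_eq_sub_comp (A := adjoint (Δ' k)) (B := β • adjoint (Γ' k))
      (fun i hi => hΔ' k i hi.symm) hΓ'D
    exact ⟨c • ((adjoint (Δ' k) ∘L Δ' k - (β • adjoint (Γ' k)) ∘L Γ' k) ∘L D k),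
      by rw [hChat, comp_smul, hsum, smul_comp c, comp_assoc]⟩
  have hQ (k) : (Δ' k ∘L adjoint (Δ' k)) ∘L Chat =
      (Δ' k ∘L adjoint (Δ' k)) ∘L Chat ∘L (Δ k ∘L adjoint (Δ k)) := by
    obtain ⟨X, hX⟩ := adjoint_comp_Chat_factors k
    calc (Δ' k ∘L adjoint (Δ' k)) ∘L Chat
        = Δ' k ∘L X ∘L adjoint (Δ k) := by rw [comp_assoc, hX]
      _ = Δ' k ∘L X ∘L (adjoint (Δ k) ∘L Δ k) ∘L adjoint (Δ k) := by rw [hΔ, one_def, id_comp]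
      _ = Δ' k ∘L (X ∘L adjoint (Δ k)) ∘L (Δ k ∘L adjoint (Δ k)) := by simp only [comp_assoc]
      _ = (Δ' k ∘L adjoint (Δ' k)) ∘L Chat ∘L (Δ k ∘L adjoint (Δ k)) := by
        rw [← hX]; simp only [comp_assoc]
  exact ⟨hQ, fun k => (comp_eq_comp_comp_iff_adjoint
    (isPositive_self_comp_adjoint (Δ k)).isSelfAdjoint
    (isPositive_self_comp_adjoint (Δ' k)).isSelfAdjoint Chat).1 (hQ k)⟩

end Adjoint

open ContinuousLinearMap in
/-- In the Coxeter-functor setup, with `Q_k = Δ_kΔ_k*`, `Q̃_k = Δ̃_kΔ̃_k*`,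
one has `Q̃_kChat = Q̃_kChatQ_k` for all `k`; equivalently `Chat*Q̃_k = Q_kChat*Q̃_k` for all `k`. -/
theorem stmt_9
    {n : ℕ} {H H' E E' : Type*}
    [NormedAddCommGroup H] [InnerProductSpace ℂ H] [CompleteSpace H]
    [NormedAddCommGroup H'] [InnerProductSpace ℂ H'] [CompleteSpace H']
    [NormedAddCommGroup E] [InnerProductSpace ℂ E] [CompleteSpace E]
    [NormedAddCommGroup E'] [InnerProductSpace ℂ E'] [CompleteSpace E']
    {K K' : Fin n → Type*}
    [∀ i, NormedAddCommGroup (K i)] [∀ i, InnerProductSpace ℂ (K i)] [∀ i, CompleteSpace (K i)]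
    [∀ i, NormedAddCommGroup (K' i)] [∀ i, InnerProductSpace ℂ (K' i)] [∀ i, CompleteSpace (K' i)]
    (α : ℝ) (hα : 1 < α)
    (P : Fin n → H →L[ℂ] H)
    (hPsa : ∀ i, IsSelfAdjoint (P i)) (hPidem : ∀ i, P i ∘L P i = P i)
    (hPsum : ∑ i, P i = (α : ℂ) • (1 : H →L[ℂ] H))
    (P' : Fin n → H' →L[ℂ] H')
    (hP'sa : ∀ i, IsSelfAdjoint (P' i)) (hP'idem : ∀ i, P' i ∘L P' i = P' i)
    (hP'sum : ∑ i, P' i = (α : ℂ) • (1 : H' →L[ℂ] H'))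
    (Γ : ∀ i, K i →L[ℂ] H)
    (hΓ₁ : ∀ i, adjoint (Γ i) ∘L Γ i = 1) (hΓ₂ : ∀ i, Γ i ∘L adjoint (Γ i) = P i)
    (Γ' : ∀ i, K' i →L[ℂ] H')
    (hΓ'₁ : ∀ i, adjoint (Γ' i) ∘L Γ' i = 1) (hΓ'₂ : ∀ i, Γ' i ∘L adjoint (Γ' i) = P' i)
    (Δ : ∀ i, K i →L[ℂ] E)
    (hΔ₁ : ∀ i, adjoint (Δ i) ∘L Δ i = 1)
    (hΔ₂ : ∑ i, Γ i ∘L adjoint (Δ i) = 0)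
    (hΔ₃ : ∀ i j, i ≠ j →
      adjoint (Δ i) ∘L Δ j = (-((α : ℂ) - 1)⁻¹) • (adjoint (Γ i) ∘L Γ j))
    (Δ' : ∀ i, K' i →L[ℂ] E')
    (hΔ'₁ : ∀ i, adjoint (Δ' i) ∘L Δ' i = 1)
    (hΔ'₂ : ∑ i, Γ' i ∘L adjoint (Δ' i) = 0)
    (hΔ'₃ : ∀ i j, i ≠ j →
      adjoint (Δ' i) ∘L Δ' j = (-((α : ℂ) - 1)⁻¹) • (adjoint (Γ' i) ∘L Γ' j))
    (C : H →L[ℂ] H')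
    (hC : ∀ i, C ∘L P i = P' i ∘L (C ∘L P i))
    (Chat : E →L[ℂ] E')
    (hChat : Chat = (((α : ℂ) - 1) / (α : ℂ)) •
      ∑ i, Δ' i ∘L (adjoint (Γ' i) ∘L C ∘L Γ i) ∘L adjoint (Δ i)) :
    (∀ k, (Δ' k ∘L adjoint (Δ' k)) ∘L Chat =
      (Δ' k ∘L adjoint (Δ' k)) ∘L Chat ∘L (Δ k ∘L adjoint (Δ k))) ∧
    (∀ k, adjoint Chat ∘L (Δ' k ∘L adjoint (Δ' k)) =
      (Δ k ∘L adjoint (Δ k)) ∘L adjoint Chat ∘L (Δ' k ∘L adjoint (Δ' k))) := by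
  have hD (i) : Γ' i ∘L (adjoint (Γ' i) ∘L C ∘L Γ i) = C ∘L Γ i :=
    comp_compression_eq_comp_of_leftInverse (hΓ₁ i) (by rw [hΓ₂, hΓ'₂]; exact hC i)
  exact stmt_9_general hΔ₁ hΔ₂ hΔ'₃ hD hChat
end

section
/- Under the hypotheses of the Coxeter-functor setup (orthogonal projections P_i on H with ΣP_i = αI_H, α > 1, projections P̃_i on H̃ with ΣP̃_i = αI_{H̃}, inclusion isometries Γ_i, Γ̃_i, and operators Δ_i, Δ̃_i satisfying the Coxeter relations), suppose C and D are bounded operators H → H̃ with CP_i = P̃_iCP_i and DP_i = P̃_iDP_i for all i, and define Ĉ = ((α−1)/α)Σ_iΔ̃_i(Γ̃_i*CΓ_i)Δ_i* and D̂ = ((α−1)/α)Σ_iΔ̃_i(Γ̃_i*DΓ_i)Δ_i*. If Ĉ = D̂, then C = D. (Univalence of the functor 𝓢′.) -/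
/-!
For `i ≠ k` the Coxeter relations replace `Δₖ* Δᵢ` by `-(a - 1)⁻¹ Γₖ* Γᵢ`. In the compression
`Δ'ₖ* (∑ᵢ Δ'ᵢ Xᵢ Δᵢ*) Δₖ` this happens once on each side of `Xᵢ`, so the off-diagonal part is
`(a - 1)⁻²` times the one obtained with `Γ`, `Γ'` in place of `Δ`, `Δ'`. If `Xᵢ = Γ'ᵢ* C Γᵢ` for an
intertwiner `C`, then `∑ᵢ Γ'ᵢ Xᵢ Γᵢ* = C ∑ᵢ Pᵢ = a C`, and the compression becomes
`(1 + (a - 1) / (a - 1)²) Xₖ = a / (a - 1) Xₖ`. Hence `Δ'ₖ* Ĉ Δₖ = Γ'ₖ* C Γₖ`, and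
`C = a⁻¹ ∑ₖ Γ'ₖ (Δ'ₖ* Ĉ Δₖ) Γₖ*` is determined by `Ĉ`. The adjoints enter only through their
composition relations, so arbitrary maps `Γstar`, `Δstar` can take their place.
-/

section Blocks

variable {R ι H H' : Type*} {K K' : ι → Type*} [CommSemiring R]
  [TopologicalSpace H] [AddCommMonoid H] [Module R H]
  [TopologicalSpace H'] [AddCommMonoid H'] [Module R H']
  [∀ i, TopologicalSpace (K i)] [∀ i, AddCommMonoid (K i)] [∀ i, Module R (K i)]
  [∀ i, TopologicalSpace (K' i)] [∀ i, AddCommMonoid (K' i)] [∀ i, Module R (K' i)]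

/-- The family of diagonal blocks `Tᵢ = p'ᵢ T sᵢ` of an operator `T`. With `p' i = (Γ' i)*` and
`s i = Γ i` these are the operators `Cᵢ` attached to an intertwiner `C`. -/
def diagBlock (p' : ∀ i, H' →L[R] K' i) (s : ∀ i, K i →L[R] H) (T : H →L[R] H') (i : ι) :
    K i →L[R] K' i :=
  p' i ∘L T ∘L s i

/-- The operator `∑ᵢ s'ᵢ Xᵢ pᵢ` assembled from a family of blocks `Xᵢ`. -/
def blockSum [Fintype ι] [ContinuousAdd H'] (s' : ∀ i, K' i →L[R] H') (p : ∀ i, H →L[R] K i)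
    (X : ∀ i, K i →L[R] K' i) : H →L[R] H' :=
  ∑ i, s' i ∘L X i ∘L p i

theorem diagBlock_smul [ContinuousConstSMul R H'] [∀ i, ContinuousConstSMul R (K' i)]
    (p' : ∀ i, H' →L[R] K' i) (s : ∀ i, K i →L[R] H) (c : R) (T : H →L[R] H') (i : ι) :
    diagBlock p' s (c • T) i = c • diagBlock p' s T i := by
  simp only [diagBlock, ContinuousLinearMap.smul_comp, ContinuousLinearMap.comp_smul]

theorem diagBlock_blockSum [Fintype ι] [ContinuousAdd H'] [∀ i, ContinuousAdd (K' i)]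
    (p' : ∀ i, H' →L[R] K' i) (s : ∀ i, K i →L[R] H)
    (s' : ∀ i, K' i →L[R] H') (p : ∀ i, H →L[R] K i) (X : ∀ i, K i →L[R] K' i) (k : ι) :
    diagBlock p' s (blockSum s' p X) k =
      ∑ i, (p' k ∘L s' i) ∘L X i ∘L (p i ∘L s k) := by
  simp only [diagBlock, blockSum, ContinuousLinearMap.finsetSum_comp,
    ContinuousLinearMap.comp_finsetSum, ContinuousLinearMap.comp_assoc]

theorem diagBlock_blockSum_eq_add_sum_erase [Fintype ι] [DecidableEq ι] [ContinuousAdd H']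
    [∀ i, ContinuousAdd (K' i)]
    {p' : ∀ i, H' →L[R] K' i} {s : ∀ i, K i →L[R] H}
    {s' : ∀ i, K' i →L[R] H'} {p : ∀ i, H →L[R] K i} {k : ι}
    (h' : p' k ∘L s' k = 1) (h : p k ∘L s k = 1) (X : ∀ i, K i →L[R] K' i) :
    diagBlock p' s (blockSum s' p X) k =
      X k + ∑ i ∈ Finset.univ.erase k, (p' k ∘L s' i) ∘L X i ∘L (p i ∘L s k) := by
  rw [diagBlock_blockSum, ← Finset.add_sum_erase _ _ (Finset.mem_univ k), h', h]
  rfl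

theorem blockSum_diagBlock_of_intertwines [Fintype ι] [ContinuousAdd H] [ContinuousConstSMul R H]
    [ContinuousAdd H'] [ContinuousConstSMul R H']
    {Γ : ∀ i, K i →L[R] H} {Γstar : ∀ i, H →L[R] K i}
    {Γ' : ∀ i, K' i →L[R] H'} {Γstar' : ∀ i, H' →L[R] K' i} {a : R}
    (hsum : ∑ i, Γ i ∘L Γstar i = a • (1 : H →L[R] H)) {C : H →L[R] H'}
    (hC : ∀ i, C ∘L (Γ i ∘L Γstar i) = (Γ' i ∘L Γstar' i) ∘L (C ∘L (Γ i ∘L Γstar i))) :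
    blockSum Γ' Γstar (diagBlock Γstar' Γ C) = a • C :=
  calc blockSum Γ' Γstar (diagBlock Γstar' Γ C)
      = ∑ i, C ∘L (Γ i ∘L Γstar i) := Finset.sum_congr rfl fun i _ => (hC i).symm
    _ = C ∘L ∑ i, Γ i ∘L Γstar i := ContinuousLinearMap.comp_finsetSum .. |>.symm
    _ = a • C := by rw [hsum, ContinuousLinearMap.comp_smul]; rfl

end Blocks

section CoxeterRelations

variable {𝕜 ι H H' E E' : Type*} {K K' : ι → Type*} [Field 𝕜]
  [TopologicalSpace H] [AddCommGroup H] [Module 𝕜 H]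
  [TopologicalSpace H'] [AddCommGroup H'] [Module 𝕜 H']
  [TopologicalSpace E] [AddCommGroup E] [Module 𝕜 E]
  [TopologicalSpace E'] [AddCommGroup E'] [Module 𝕜 E']
  [∀ i, TopologicalSpace (K i)] [∀ i, AddCommGroup (K i)] [∀ i, Module 𝕜 (K i)]
  [∀ i, TopologicalSpace (K' i)] [∀ i, AddCommGroup (K' i)] [∀ i, Module 𝕜 (K' i)]

/-- The operator `Ĉ = ((a - 1) / a) ∑ᵢ Δ'ᵢ Cᵢ Δᵢ*`, the value of the Coxeter functor on a
morphism `C` with blocks `Cᵢ = Γ'ᵢ* C Γᵢ`. -/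
def coxeterTransform [Fintype ι] [ContinuousAdd E'] [ContinuousConstSMul 𝕜 E'] (a : 𝕜)
    (Γ : ∀ i, K i →L[𝕜] H) (Γstar' : ∀ i, H' →L[𝕜] K' i)
    (Δstar : ∀ i, E →L[𝕜] K i) (Δ' : ∀ i, K' i →L[𝕜] E') (C : H →L[𝕜] H') : E →L[𝕜] E' :=
  ((a - 1) / a) • blockSum Δ' Δstar (diagBlock Γstar' Γ C)

variable [∀ i, ContinuousConstSMul 𝕜 (K i)] [∀ i, ContinuousConstSMul 𝕜 (K' i)]

/-- The Coxeter relations between the Gram operators `Γᵢ* Γⱼ` and `Δᵢ* Δⱼ` of two families of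
isometries with the same domains. The maps `Γstar i` and `Δstar i` play the role of the adjoints of
`Γ i` and `Δ i`. -/
structure CoxeterGramRelations (a : 𝕜) (Γ : ∀ i, K i →L[𝕜] H) (Γstar : ∀ i, H →L[𝕜] K i)
    (Δ : ∀ i, K i →L[𝕜] E) (Δstar : ∀ i, E →L[𝕜] K i) : Prop where
  Γstar_comp_Γ : ∀ i, Γstar i ∘L Γ i = 1
  Δstar_comp_Δ : ∀ i, Δstar i ∘L Δ i = 1
  Δstar_comp_Δ_of_ne : ∀ i j, i ≠ j → Δstar i ∘L Δ j = (-(a - 1)⁻¹) • (Γstar i ∘L Γ j)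

variable {a : 𝕜} {Γ : ∀ i, K i →L[𝕜] H} {Γstar : ∀ i, H →L[𝕜] K i}
  {Δ : ∀ i, K i →L[𝕜] E} {Δstar : ∀ i, E →L[𝕜] K i}
  {Γ' : ∀ i, K' i →L[𝕜] H'} {Γstar' : ∀ i, H' →L[𝕜] K' i}
  {Δ' : ∀ i, K' i →L[𝕜] E'} {Δstar' : ∀ i, E' →L[𝕜] K' i}

namespace CoxeterGramRelations

theorem comp_comp_of_ne (h : CoxeterGramRelations a Γ Γstar Δ Δstar)
    (h' : CoxeterGramRelations a Γ' Γstar' Δ' Δstar') {i k : ι} (hik : i ≠ k)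
    (X : K i →L[𝕜] K' i) :
    (Δstar' k ∘L Δ' i) ∘L X ∘L (Δstar i ∘L Δ k) =
      ((a - 1)⁻¹ ^ 2) • ((Γstar' k ∘L Γ' i) ∘L X ∘L (Γstar i ∘L Γ k)) := by
  rw [h'.Δstar_comp_Δ_of_ne k i hik.symm, h.Δstar_comp_Δ_of_ne i k hik]
  simp only [ContinuousLinearMap.smul_comp, ContinuousLinearMap.comp_smul, smul_smul,
    neg_mul_neg, sq]

variable [Fintype ι] [ContinuousAdd H'] [ContinuousAdd E']
  [∀ i, IsTopologicalAddGroup (K' i)]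

theorem diagBlock_blockSum_sub (h : CoxeterGramRelations a Γ Γstar Δ Δstar)
    (h' : CoxeterGramRelations a Γ' Γstar' Δ' Δstar') (X : ∀ i, K i →L[𝕜] K' i) (k : ι) :
    diagBlock Δstar' Δ (blockSum Δ' Δstar X) k - X k =
      ((a - 1)⁻¹ ^ 2) • (diagBlock Γstar' Γ (blockSum Γ' Γstar X) k - X k) := by
  classical
  rw [diagBlock_blockSum_eq_add_sum_erase (h'.Δstar_comp_Δ k) (h.Δstar_comp_Δ k),
    diagBlock_blockSum_eq_add_sum_erase (h'.Γstar_comp_Γ k) (h.Γstar_comp_Γ k),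
    add_sub_cancel_left, add_sub_cancel_left, Finset.smul_sum]
  exact Finset.sum_congr rfl fun i hi => comp_comp_of_ne h h' (Finset.ne_of_mem_erase hi) (X i)

variable [ContinuousAdd H] [ContinuousConstSMul 𝕜 H] [ContinuousConstSMul 𝕜 H']
  [ContinuousConstSMul 𝕜 E'] {C : H →L[𝕜] H'}

theorem diagBlock_coxeterTransform (h : CoxeterGramRelations a Γ Γstar Δ Δstar)
    (h' : CoxeterGramRelations a Γ' Γstar' Δ' Δstar') (ha₀ : a ≠ 0) (ha₁ : a ≠ 1)
    (hsum : ∑ i, Γ i ∘L Γstar i = a • (1 : H →L[𝕜] H))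
    (hC : ∀ i, C ∘L (Γ i ∘L Γstar i) = (Γ' i ∘L Γstar' i) ∘L (C ∘L (Γ i ∘L Γstar i))) :
    diagBlock Δstar' Δ (coxeterTransform a Γ Γstar' Δstar Δ' C) = diagBlock Γstar' Γ C := by
  have ha : a - 1 ≠ 0 := sub_ne_zero.2 ha₁
  ext1 k
  have hblock := diagBlock_blockSum_sub h h' (diagBlock Γstar' Γ C) k
  rw [blockSum_diagBlock_of_intertwines hsum hC, diagBlock_smul, sub_eq_iff_eq_add] at hblock
  rw [coxeterTransform, diagBlock_smul, hblock]
  match_scalars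
  field_simp
  ring

theorem blockSum_diagBlock_coxeterTransform (h : CoxeterGramRelations a Γ Γstar Δ Δstar)
    (h' : CoxeterGramRelations a Γ' Γstar' Δ' Δstar') (ha₀ : a ≠ 0) (ha₁ : a ≠ 1)
    (hsum : ∑ i, Γ i ∘L Γstar i = a • (1 : H →L[𝕜] H))
    (hC : ∀ i, C ∘L (Γ i ∘L Γstar i) = (Γ' i ∘L Γstar' i) ∘L (C ∘L (Γ i ∘L Γstar i))) :
    blockSum Γ' Γstar (diagBlock Δstar' Δ (coxeterTransform a Γ Γstar' Δstar Δ' C)) = a • C := by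
  rw [diagBlock_coxeterTransform h h' ha₀ ha₁ hsum hC, blockSum_diagBlock_of_intertwines hsum hC]

end CoxeterGramRelations

theorem stmt_10_general [Fintype ι] [ContinuousAdd H] [ContinuousConstSMul 𝕜 H]
    [ContinuousAdd H'] [ContinuousConstSMul 𝕜 H']
    [ContinuousAdd E'] [ContinuousConstSMul 𝕜 E'] [∀ i, IsTopologicalAddGroup (K' i)]
    (h : CoxeterGramRelations a Γ Γstar Δ Δstar)
    (h' : CoxeterGramRelations a Γ' Γstar' Δ' Δstar') (ha₀ : a ≠ 0) (ha₁ : a ≠ 1)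
    (hsum : ∑ i, Γ i ∘L Γstar i = a • (1 : H →L[𝕜] H)) {C D : H →L[𝕜] H'}
    (hC : ∀ i, C ∘L (Γ i ∘L Γstar i) = (Γ' i ∘L Γstar' i) ∘L (C ∘L (Γ i ∘L Γstar i)))
    (hD : ∀ i, D ∘L (Γ i ∘L Γstar i) = (Γ' i ∘L Γstar' i) ∘L (D ∘L (Γ i ∘L Γstar i)))
    (hCD : coxeterTransform a Γ Γstar' Δstar Δ' C = coxeterTransform a Γ Γstar' Δstar Δ' D) :
    C = D := by
  have hsmul : a • C = a • D := by
    rw [← h.blockSum_diagBlock_coxeterTransform h' ha₀ ha₁ hsum hC, hCD,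
      h.blockSum_diagBlock_coxeterTransform h' ha₀ ha₁ hsum hD]
  exact (smul_right_inj ha₀).1 hsmul

end CoxeterRelations

open ContinuousLinearMap in
/-- Univalence of the functor `𝓢′`: if `Ĉ = D̂` then `C = D`. -/
theorem stmt_10
    {n : ℕ} {H H' E E' : Type*}
    [NormedAddCommGroup H] [InnerProductSpace ℂ H] [CompleteSpace H]
    [NormedAddCommGroup H'] [InnerProductSpace ℂ H'] [CompleteSpace H']
    [NormedAddCommGroup E] [InnerProductSpace ℂ E] [CompleteSpace E]
    [NormedAddCommGroup E'] [InnerProductSpace ℂ E'] [CompleteSpace E']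
    {K K' : Fin n → Type*}
    [∀ i, NormedAddCommGroup (K i)] [∀ i, InnerProductSpace ℂ (K i)] [∀ i, CompleteSpace (K i)]
    [∀ i, NormedAddCommGroup (K' i)] [∀ i, InnerProductSpace ℂ (K' i)] [∀ i, CompleteSpace (K' i)]
    (α : ℝ) (hα : 1 < α)
    (P : Fin n → H →L[ℂ] H)
    (hPsa : ∀ i, IsSelfAdjoint (P i)) (hPidem : ∀ i, P i ∘L P i = P i)
    (hPsum : ∑ i, P i = (α : ℂ) • (1 : H →L[ℂ] H))
    (P' : Fin n → H' →L[ℂ] H')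
    (hP'sa : ∀ i, IsSelfAdjoint (P' i)) (hP'idem : ∀ i, P' i ∘L P' i = P' i)
    (hP'sum : ∑ i, P' i = (α : ℂ) • (1 : H' →L[ℂ] H'))
    (Γ : ∀ i, K i →L[ℂ] H)
    (hΓ₁ : ∀ i, adjoint (Γ i) ∘L Γ i = 1) (hΓ₂ : ∀ i, Γ i ∘L adjoint (Γ i) = P i)
    (Γ' : ∀ i, K' i →L[ℂ] H')
    (hΓ'₁ : ∀ i, adjoint (Γ' i) ∘L Γ' i = 1) (hΓ'₂ : ∀ i, Γ' i ∘L adjoint (Γ' i) = P' i)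
    (Δ : ∀ i, K i →L[ℂ] E)
    (hΔ₁ : ∀ i, adjoint (Δ i) ∘L Δ i = 1)
    (hΔ₂ : ∑ i, Γ i ∘L adjoint (Δ i) = 0)
    (hΔ₃ : ∀ i j, i ≠ j →
      adjoint (Δ i) ∘L Δ j = (-((α : ℂ) - 1)⁻¹) • (adjoint (Γ i) ∘L Γ j))
    (Δ' : ∀ i, K' i →L[ℂ] E')
    (hΔ'₁ : ∀ i, adjoint (Δ' i) ∘L Δ' i = 1)
    (hΔ'₂ : ∑ i, Γ' i ∘L adjoint (Δ' i) = 0)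
    (hΔ'₃ : ∀ i j, i ≠ j →
      adjoint (Δ' i) ∘L Δ' j = (-((α : ℂ) - 1)⁻¹) • (adjoint (Γ' i) ∘L Γ' j))
    (C D : H →L[ℂ] H')
    (hC : ∀ i, C ∘L P i = P' i ∘L (C ∘L P i))
    (hD : ∀ i, D ∘L P i = P' i ∘L (D ∘L P i))
    (hCD : (((α : ℂ) - 1) / (α : ℂ)) •
        ∑ i, Δ' i ∘L (adjoint (Γ' i) ∘L C ∘L Γ i) ∘L adjoint (Δ i) =
      (((α : ℂ) - 1) / (α : ℂ)) •
        ∑ i, Δ' i ∘L (adjoint (Γ' i) ∘L D ∘L Γ i) ∘L adjoint (Δ i)) :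
    C = D := by
  obtain rfl : (fun i => Γ i ∘L adjoint (Γ i)) = P := funext hΓ₂
  obtain rfl : (fun i => Γ' i ∘L adjoint (Γ' i)) = P' := funext hΓ'₂
  exact stmt_10_general ⟨hΓ₁, hΔ₁, hΔ₃⟩ ⟨hΓ'₁, hΔ'₁, hΔ'₃⟩
    (by exact_mod_cast (zero_lt_one.trans hα).ne') (by exact_mod_cast hα.ne') hPsum hC hD hCD
end

section
/- Under the hypotheses of the Coxeter-functor setup (with projection families P_i on H and P̃_i on H̃, both summing to αI with α > 1, inclusion isometries Γ_i, Γ̃_i, and operators Δ_i, Δ̃_i satisfying the Coxeter relations with Q_k = Δ_kΔ_k*, Q̃_k = Δ̃_kΔ̃_k*), let r̂ : Ĥ → H̃̂ be a bounded operator with Q̃_k r̂ = Q̃_k r̂ Q_k for all k, set r_k = Δ̃_k* r̂ Δ_k and r = (1/α) Σ_{i=1}^n Γ̃_i r_i Γ_i*. Then for every k = 1,…,n: (i) rΓ_k = Γ̃_k r_k; (ii) r_k = Γ̃_k* r Γ_k; and consequently (iii) rP_k = P̃_k r P_k, i.e., r maps range P_k into range P̃_k. (Completeness of the functor 𝓢′.)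 -/
/-!
Let `Γinv i` and `Δinv i` be left inverses of `Γ i` and `Δ i`, such as the adjoints of isometries,
and write `r_i = Δ'inv i rhat Δ i`. The Coxeter relations say that `Γinv i Γ k` is
`-(α - 1) Δinv i Δ k`, corrected on the diagonal by the scalar `α`. Hence `∑ t i Γinv i` restricts
to `α t k` along `Γ k` whenever `∑ t i Δinv i = 0`. For `t i = Γ' i r_i` this vanishing is
`∑ Γ' i Δ'inv i = 0` composed with `rhat`, because the condition on `rhat` amounts to
`Δ'inv i rhat = r_i Δinv i`.
-/

namespace CoxeterFunctor

section Retraction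

variable {R M M' N N' : Type*} [Semiring R]
  [TopologicalSpace M] [AddCommMonoid M] [Module R M]
  [TopologicalSpace M'] [AddCommMonoid M'] [Module R M']
  [TopologicalSpace N] [AddCommMonoid N] [Module R N]
  [TopologicalSpace N'] [AddCommMonoid N'] [Module R N']

theorem comp_eq_comp_of_projection_comp_eq {i : M →L[R] N} {p : N →L[R] M} (hp : p ∘L i = 1)
    {f g : N' →L[R] N} (h : (i ∘L p) ∘L f = (i ∘L p) ∘L g) : p ∘L f = p ∘L g :=
  have i_injective : Function.Injective i :=
    Function.LeftInverse.injective (g := p) (DFunLike.congr_fun hp)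
  ContinuousLinearMap.cancel_left i_injective h

theorem eq_retraction_comp_of_comp_eq {i : M →L[R] N} {i' : M' →L[R] N'} {p' : N' →L[R] M'}
    (hp' : p' ∘L i' = 1) {r : N →L[R] N'} {s : M →L[R] M'} (h : r ∘L i = i' ∘L s) :
    s = p' ∘L r ∘L i := by
  rw [h, ← ContinuousLinearMap.comp_assoc, hp', ContinuousLinearMap.one_def,
    ContinuousLinearMap.id_comp]

theorem comp_projection_eq_projection_comp_of_comp_eq {i : M →L[R] N} (p : N →L[R] M)
    {i' : M' →L[R] N'} {p' : N' →L[R] M'} (hp' : p' ∘L i' = 1)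
    {r : N →L[R] N'} {s : M →L[R] M'} (h : r ∘L i = i' ∘L s) :
    r ∘L (i ∘L p) = (i' ∘L p') ∘L r ∘L (i ∘L p) :=
  calc r ∘L (i ∘L p) = (i' ∘L s) ∘L p := by rw [← h, ContinuousLinearMap.comp_assoc]
    _ = (i' ∘L p') ∘L r ∘L (i ∘L p) := by
      rw [eq_retraction_comp_of_comp_eq hp' h]; rfl

end Retraction

theorem sum_comp_comp_eq_zero_of_intertwining {R ι E E' F : Type*} {K K' : ι → Type*}
    [Semiring R] [Fintype ι]
    [TopologicalSpace E] [AddCommMonoid E] [Module R E]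
    [TopologicalSpace E'] [AddCommMonoid E'] [Module R E']
    [TopologicalSpace F] [AddCommMonoid F] [Module R F] [ContinuousAdd F]
    [∀ i, TopologicalSpace (K i)] [∀ i, AddCommMonoid (K i)] [∀ i, Module R (K i)]
    [∀ i, TopologicalSpace (K' i)] [∀ i, AddCommMonoid (K' i)] [∀ i, Module R (K' i)]
    {u : ∀ i, K' i →L[R] F} {q' : ∀ i, E' →L[R] K' i} (hsum : ∑ i, u i ∘L q' i = 0)
    {f : E →L[R] E'} {q : ∀ i, E →L[R] K i} {s : ∀ i, K i →L[R] K' i}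
    (hf : ∀ i, q' i ∘L f = s i ∘L q i) :
    ∑ i, (u i ∘L s i) ∘L q i = 0 :=
  calc ∑ i, (u i ∘L s i) ∘L q i = (∑ i, u i ∘L q' i) ∘L f := by
        simp only [ContinuousLinearMap.finsetSum_comp, ContinuousLinearMap.comp_assoc, hf]
    _ = 0 := by rw [hsum, ContinuousLinearMap.zero_comp]

section Gram

variable {R ι H E F : Type*} {K : ι → Type*} [CommRing R]
  [TopologicalSpace H] [AddCommGroup H] [Module R H]
  [TopologicalSpace E] [AddCommGroup E] [Module R E]
  [TopologicalSpace F] [AddCommGroup F] [Module R F] [IsTopologicalAddGroup F]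
  [ContinuousConstSMul R F]
  [∀ i, TopologicalSpace (K i)] [∀ i, AddCommGroup (K i)] [∀ i, Module R (K i)]
  [∀ i, ContinuousConstSMul R (K i)]
  {α : R} {Γ : ∀ i, K i →L[R] H} {Γinv : ∀ i, H →L[R] K i} {Δ : ∀ i, K i →L[R] E}
  {Δinv : ∀ i, E →L[R] K i}

theorem comp_retraction_comp_eq_single_sub [DecidableEq ι] (hΓ : ∀ i, Γinv i ∘L Γ i = 1)
    (hΔ : ∀ i, Δinv i ∘L Δ i = 1)
    (hΓΔ : ∀ i j, i ≠ j → Γinv i ∘L Γ j = (1 - α) • (Δinv i ∘L Δ j))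
    (t : ∀ i, K i →L[R] F) (i k : ι) :
    t i ∘L Γinv i ∘L Γ k =
      Pi.single (M := fun _ => K k →L[R] F) k (α • t k) i -
        (α - 1) • (t i ∘L Δinv i ∘L Δ k) := by
  rcases eq_or_ne i k with rfl | hik
  · rw [hΓ, hΔ, Pi.single_eq_same, ContinuousLinearMap.one_def, ContinuousLinearMap.comp_id]
    module
  · rw [hΓΔ i k hik, Pi.single_eq_of_ne hik, ContinuousLinearMap.comp_smul]
    module

theorem sum_comp_retraction_comp_eq_smul [Fintype ι] (hΓ : ∀ i, Γinv i ∘L Γ i = 1)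
    (hΔ : ∀ i, Δinv i ∘L Δ i = 1)
    (hΓΔ : ∀ i j, i ≠ j → Γinv i ∘L Γ j = (1 - α) • (Δinv i ∘L Δ j))
    {t : ∀ i, K i →L[R] F} (ht : ∑ i, t i ∘L Δinv i = 0) (k : ι) :
    (∑ i, t i ∘L Γinv i) ∘L Γ k = α • t k := by
  classical
  calc (∑ i, t i ∘L Γinv i) ∘L Γ k
      = ∑ i, (Pi.single (M := fun _ => K k →L[R] F) k (α • t k) i -
          (α - 1) • (t i ∘L Δinv i ∘L Δ k)) := by
        simp only [ContinuousLinearMap.finsetSum_comp, ContinuousLinearMap.comp_assoc,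
          comp_retraction_comp_eq_single_sub hΓ hΔ hΓΔ]
    _ = α • t k - (α - 1) • ((∑ i, t i ∘L Δinv i) ∘L Δ k) := by
        simp only [Finset.sum_sub_distrib, Finset.sum_pi_single', Finset.mem_univ, if_true,
          ← Finset.smul_sum, ContinuousLinearMap.finsetSum_comp, ContinuousLinearMap.comp_assoc]
    _ = α • t k := by rw [ht, ContinuousLinearMap.zero_comp, smul_zero, sub_zero]

end Gram

end CoxeterFunctor

open CoxeterFunctor in
theorem stmt_12_general
    {𝕜 ι H H' E E' : Type*} {K K' : ι → Type*} [Field 𝕜] [Fintype ι]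
    [TopologicalSpace H] [AddCommGroup H] [Module 𝕜 H]
    [TopologicalSpace H'] [AddCommGroup H'] [Module 𝕜 H'] [IsTopologicalAddGroup H']
    [ContinuousConstSMul 𝕜 H']
    [TopologicalSpace E] [AddCommGroup E] [Module 𝕜 E]
    [TopologicalSpace E'] [AddCommGroup E'] [Module 𝕜 E']
    [∀ i, TopologicalSpace (K i)] [∀ i, AddCommGroup (K i)] [∀ i, Module 𝕜 (K i)]
    [∀ i, ContinuousConstSMul 𝕜 (K i)]
    [∀ i, TopologicalSpace (K' i)] [∀ i, AddCommGroup (K' i)] [∀ i, Module 𝕜 (K' i)]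
    {α : 𝕜} (hα₀ : α ≠ 0) (hα₁ : α ≠ 1)
    {P : ι → H →L[𝕜] H} {P' : ι → H' →L[𝕜] H'}
    {Γ : ∀ i, K i →L[𝕜] H} {Γinv : ∀ i, H →L[𝕜] K i}
    (hΓ : ∀ i, Γinv i ∘L Γ i = 1) (hP : ∀ i, Γ i ∘L Γinv i = P i)
    {Γ' : ∀ i, K' i →L[𝕜] H'} {Γ'inv : ∀ i, H' →L[𝕜] K' i}
    (hΓ' : ∀ i, Γ'inv i ∘L Γ' i = 1) (hP' : ∀ i, Γ' i ∘L Γ'inv i = P' i)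
    {Δ : ∀ i, K i →L[𝕜] E} {Δinv : ∀ i, E →L[𝕜] K i}
    (hΔ : ∀ i, Δinv i ∘L Δ i = 1)
    (hΔΓ : ∀ i j, i ≠ j → Δinv i ∘L Δ j = (-(α - 1)⁻¹) • (Γinv i ∘L Γ j))
    {Δ' : ∀ i, K' i →L[𝕜] E'} {Δ'inv : ∀ i, E' →L[𝕜] K' i}
    (hΔ' : ∀ i, Δ'inv i ∘L Δ' i = 1) (hΓ'Δ' : ∑ i, Γ' i ∘L Δ'inv i = 0)
    {rhat : E →L[𝕜] E'}
    (hrhat : ∀ k, (Δ' k ∘L Δ'inv k) ∘L rhat = (Δ' k ∘L Δ'inv k) ∘L rhat ∘L (Δ k ∘L Δinv k))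
    {r : H →L[𝕜] H'}
    (hr : r = α⁻¹ • ∑ i, Γ' i ∘L (Δ'inv i ∘L rhat ∘L Δ i) ∘L Γinv i) (k : ι) :
    r ∘L Γ k = Γ' k ∘L (Δ'inv k ∘L rhat ∘L Δ k) ∧
      Δ'inv k ∘L rhat ∘L Δ k = Γ'inv k ∘L r ∘L Γ k ∧
      r ∘L P k = P' k ∘L r ∘L P k := by
  have intertwining (i) : Δ'inv i ∘L rhat = (Δ'inv i ∘L rhat ∘L Δ i) ∘L Δinv i :=
    comp_eq_comp_of_projection_comp_eq (hΔ' i) (hrhat i)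
  have hΓΔ (i j) (hij : i ≠ j) : Γinv i ∘L Γ j = (1 - α) • (Δinv i ∘L Δ j) := by
    rw [hΔΓ i j hij, smul_smul, mul_neg, ← neg_mul, neg_sub,
      mul_inv_cancel₀ (sub_ne_zero.mpr hα₁), one_smul]
  have sum_restrict := sum_comp_retraction_comp_eq_smul hΓ hΔ hΓΔ
    (sum_comp_comp_eq_zero_of_intertwining hΓ'Δ' intertwining) k
  have restrict : r ∘L Γ k = Γ' k ∘L (Δ'inv k ∘L rhat ∘L Δ k) := by
    rw [hr, ContinuousLinearMap.smul_comp, inv_smul_eq_iff₀ hα₀]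
    exact sum_restrict
  refine ⟨restrict, eq_retraction_comp_of_comp_eq (hΓ' k) restrict, ?_⟩
  rw [← hP, ← hP']
  exact comp_projection_eq_projection_comp_of_comp_eq (Γinv k) (hΓ' k) restrict

open ContinuousLinearMap in
/-- Completeness of the functor `𝓢′`: with `r_k = Δ̃_k* rhat Δ_k` and
`r = (1/α) Σ Γ̃_i r_i Γ_i*`, one has `rΓ_k = Γ̃_k r_k`, `r_k = Γ̃_k* r Γ_k`, and
`rP_k = P̃_k r P_k` for all `k`. -/
theorem stmt_12
    {n : ℕ} {H H' E E' : Type*}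
    [NormedAddCommGroup H] [InnerProductSpace ℂ H] [CompleteSpace H]
    [NormedAddCommGroup H'] [InnerProductSpace ℂ H'] [CompleteSpace H']
    [NormedAddCommGroup E] [InnerProductSpace ℂ E] [CompleteSpace E]
    [NormedAddCommGroup E'] [InnerProductSpace ℂ E'] [CompleteSpace E']
    {K K' : Fin n → Type*}
    [∀ i, NormedAddCommGroup (K i)] [∀ i, InnerProductSpace ℂ (K i)] [∀ i, CompleteSpace (K i)]
    [∀ i, NormedAddCommGroup (K' i)] [∀ i, InnerProductSpace ℂ (K' i)] [∀ i, CompleteSpace (K' i)]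
    (α : ℝ) (hα : 1 < α)
    (P : Fin n → H →L[ℂ] H)
    (hPsa : ∀ i, IsSelfAdjoint (P i)) (hPidem : ∀ i, P i ∘L P i = P i)
    (hPsum : ∑ i, P i = (α : ℂ) • (1 : H →L[ℂ] H))
    (P' : Fin n → H' →L[ℂ] H')
    (hP'sa : ∀ i, IsSelfAdjoint (P' i)) (hP'idem : ∀ i, P' i ∘L P' i = P' i)
    (hP'sum : ∑ i, P' i = (α : ℂ) • (1 : H' →L[ℂ] H'))
    (Γ : ∀ i, K i →L[ℂ] H)
    (hΓ₁ : ∀ i, adjoint (Γ i) ∘L Γ i = 1) (hΓ₂ : ∀ i, Γ i ∘L adjoint (Γ i) = P i)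
    (Γ' : ∀ i, K' i →L[ℂ] H')
    (hΓ'₁ : ∀ i, adjoint (Γ' i) ∘L Γ' i = 1) (hΓ'₂ : ∀ i, Γ' i ∘L adjoint (Γ' i) = P' i)
    (Δ : ∀ i, K i →L[ℂ] E)
    (hΔ₁ : ∀ i, adjoint (Δ i) ∘L Δ i = 1)
    (hΔ₂ : ∑ i, Γ i ∘L adjoint (Δ i) = 0)
    (hΔ₃ : ∀ i j, i ≠ j →
      adjoint (Δ i) ∘L Δ j = (-((α : ℂ) - 1)⁻¹) • (adjoint (Γ i) ∘L Γ j))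
    (Δ' : ∀ i, K' i →L[ℂ] E')
    (hΔ'₁ : ∀ i, adjoint (Δ' i) ∘L Δ' i = 1)
    (hΔ'₂ : ∑ i, Γ' i ∘L adjoint (Δ' i) = 0)
    (hΔ'₃ : ∀ i j, i ≠ j →
      adjoint (Δ' i) ∘L Δ' j = (-((α : ℂ) - 1)⁻¹) • (adjoint (Γ' i) ∘L Γ' j))
    (rhat : E →L[ℂ] E')
    (hrhat : ∀ k, (Δ' k ∘L adjoint (Δ' k)) ∘L rhat =
      (Δ' k ∘L adjoint (Δ' k)) ∘L rhat ∘L (Δ k ∘L adjoint (Δ k)))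
    (r : H →L[ℂ] H')
    (hr : r = (α : ℂ)⁻¹ •
      ∑ i, Γ' i ∘L (adjoint (Δ' i) ∘L rhat ∘L Δ i) ∘L adjoint (Γ i)) :
    ∀ k, (r ∘L Γ k = Γ' k ∘L (adjoint (Δ' k) ∘L rhat ∘L Δ k)) ∧
      (adjoint (Δ' k) ∘L rhat ∘L Δ k = adjoint (Γ' k) ∘L r ∘L Γ k) ∧
      (r ∘L P k = P' k ∘L r ∘L P k) :=
  stmt_12_general (by exact_mod_cast (zero_lt_one.trans hα).ne') (by exact_mod_cast hα.ne')
    hΓ₁ hΓ₂ hΓ'₁ hΓ'₂ hΔ₁ hΔ₃ hΔ'₁ hΔ'₂ hrhat hr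
end

section
/- Let H and Ĥ be complex Hilbert spaces, α > 1, and P_1,…,P_n orthogonal projections on H with ΣP_i = αI_H. Let Γ_i be the inclusion isometries of H_i = range P_i and Δ_i : H_i → Ĥ operators satisfying the Coxeter relations (Δ_i*Δ_i = I, Σ_iΓ_iΔ_i* = 0, Δ_i*Δ_j = −(1/(α−1))Γ_i*Γ_j for i ≠ j) and Σ_i Δ_iΔ_i* = (α/(α−1)) I_Ĥ; put Q_i = Δ_iΔ_i*. If the system (H; range P_1,…,range P_n) is transitive (every bounded operator on H leaving each range P_i invariant is scalar), then the system (Ĥ; range Q_1,…,range Q_n) is transitive. -/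
/-!
Write `Γ = (Γ_i)` and `Δ = (Δ_i)` for the row operators on `⨁ K_i`. The Coxeter relations say
`Γ*Γ + (α - 1) Δ*Δ = α` and `ΓΔ* = 0`. If `R` leaves every `range Δ_i` invariant, then `RΔ = ΔD` for
a block diagonal `D`, so `Δ*R* = D*Δ*`. The two relations give
`ΓD*Γ*Γ = αΓD* - (α - 1) ΓD*Δ*Δ = αΓD* - (α - 1) ΓΔ*R*Δ = αΓD*`, so `S = α⁻¹ΓD*Γ*` satisfies
`SΓ = ΓD*`. Hence `S` leaves every `range Γ_i` invariant and is a scalar `c` by transitivity; then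
`D* = c`, so `Δ*R* = cΔ*`, and `R* = c` because `ΔΔ*` is a nonzero scalar.
-/

section Retract

open ContinuousLinearMap

variable {R M N : Type*} [Semiring R]
  [AddCommMonoid M] [TopologicalSpace M] [Module R M]
  [AddCommMonoid N] [TopologicalSpace N] [Module R N]
  {V : M →L[R] N} {W : N →L[R] M}

theorem range_comp_eq_range_of_comp_eq_one (hWV : W ∘L V = 1) :
    Set.range (V ∘L W) = Set.range V :=
  Function.Surjective.range_comp (fun v ↦ ⟨V v, congr($hWV v)⟩) V

theorem mapsTo_range_iff_exists_comp_eq (hWV : W ∘L V = 1) {T : N →L[R] N} :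
    Set.MapsTo T (Set.range V) (Set.range V) ↔ ∃ D : M →L[R] M, T ∘L V = V ∘L D := by
  constructor
  · intro hT
    refine ⟨W ∘L T ∘L V, ?_⟩
    ext v
    obtain ⟨u, hu⟩ := hT ⟨v, rfl⟩
    have hWu : W (V u) = u := congr($hWV u)
    simp only [comp_apply, ← hu, hWu]
  · rintro ⟨D, hD⟩ _ ⟨v, rfl⟩
    exact ⟨D v, congr($hD.symm v)⟩

end Retract

theorem eq_of_sum_comp_eq_smul_one {𝕜 ι F G : Type*} {K : ι → Type*} [Fintype ι] [Field 𝕜]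
    [AddCommMonoid F] [TopologicalSpace F] [Module 𝕜 F]
    [AddCommMonoid G] [TopologicalSpace G] [Module 𝕜 G]
    [ContinuousAdd G] [ContinuousConstSMul 𝕜 G]
    [∀ i, AddCommMonoid (K i)] [∀ i, TopologicalSpace (K i)] [∀ i, Module 𝕜 (K i)]
    {A : ∀ i, G →L[𝕜] K i} {B : ∀ i, K i →L[𝕜] G} {b : 𝕜} (hb : b ≠ 0)
    (hBA : ∑ i, B i ∘L A i = b • (1 : G →L[𝕜] G)) {S T : F →L[𝕜] G}
    (hST : ∀ i, A i ∘L S = A i ∘L T) : S = T := by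
  have smul_eq_sum (X : F →L[𝕜] G) : b • X = ∑ i, B i ∘L A i ∘L X :=
    calc b • X = (b • (1 : G →L[𝕜] G)) ∘L X := rfl
      _ = ∑ i, B i ∘L A i ∘L X := by
        simp only [← hBA, ContinuousLinearMap.finsetSum_comp, ContinuousLinearMap.comp_assoc]
  refine (Units.mk0 b hb).isUnit.smul_left_cancel.mp ?_
  simp only [Units.val_mk0, smul_eq_sum, hST]

section Coxeter

open ContinuousLinearMap
open scoped InnerProduct

variable {𝕜 ι H E : Type*} {K : ι → Type*} [RCLike 𝕜]
  [NormedAddCommGroup H] [InnerProductSpace 𝕜 H]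
  [NormedAddCommGroup E] [InnerProductSpace 𝕜 E]
  [∀ i, NormedAddCommGroup (K i)] [∀ i, InnerProductSpace 𝕜 (K i)]

/-- Transitivity of the system `(H; U i)` of subspaces: only scalar operators on `H` leave every
`U i` invariant. -/
def IsTransitiveSystem (U : ι → Submodule 𝕜 H) : Prop :=
  ∀ R : H →L[𝕜] H, (∀ i, Set.MapsTo R (U i) (U i)) → ∃ c : 𝕜, R = c • 1

variable [Fintype ι] [CompleteSpace H] [CompleteSpace E] [∀ i, CompleteSpace (K i)]

/-- The Coxeter relations with parameter `a`, linking the isometries `Γ i` onto the subspaces of a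
system in `H` to the isometries `Δ i` whose ranges form its image under the Coxeter functor. -/
structure CoxeterRelations (a : 𝕜) (Γ : ∀ i, K i →L[𝕜] H) (Δ : ∀ i, K i →L[𝕜] E) : Prop where
  adjoint_comp_self_left (i : ι) : (Γ i)† ∘L Γ i = 1
  adjoint_comp_self_right (i : ι) : (Δ i)† ∘L Δ i = 1
  sum_comp_adjoint : ∑ i, Γ i ∘L (Δ i)† = 0
  adjoint_comp_of_ne (i j : ι) (hij : i ≠ j) :
    (Δ i)† ∘L Δ j = (-(a - 1)⁻¹) • ((Γ i)† ∘L Γ j)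

namespace CoxeterRelations

variable {a : 𝕜} {Γ : ∀ i, K i →L[𝕜] H} {Δ : ∀ i, K i →L[𝕜] E}

theorem sum_comp_adjoint_comp_add {F : Type*} [NormedAddCommGroup F] [NormedSpace 𝕜 F]
    (h : CoxeterRelations a Γ Δ) (ha₁ : a ≠ 1) (T : ∀ i, K i →L[𝕜] F) (i : ι) :
    (∑ j, T j ∘L (Γ j)†) ∘L Γ i + (a - 1) • (∑ j, T j ∘L (Δ j)†) ∘L Δ i = a • T i := by
  simp only [finsetSum_comp, comp_assoc, Finset.smul_sum, ← Finset.sum_add_distrib]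
  have diagonal : T i ∘L (Γ i)† ∘L Γ i + (a - 1) • T i ∘L (Δ i)† ∘L Δ i = a • T i := by
    rw [h.adjoint_comp_self_left, h.adjoint_comp_self_right, one_def, comp_id]
    module
  have off_diagonal (j : ι) (hj : j ≠ i) :
      T j ∘L (Γ j)† ∘L Γ i + (a - 1) • T j ∘L (Δ j)† ∘L Δ i = 0 := by
    rw [h.adjoint_comp_of_ne j i hj, comp_smul, smul_smul, mul_neg,
      mul_inv_cancel₀ (sub_ne_zero.mpr ha₁), neg_one_smul, add_neg_cancel]
  rw [Fintype.sum_eq_single i off_diagonal, diagonal]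

theorem inv_smul_sum_comp_eq (h : CoxeterRelations a Γ Δ) (ha₀ : a ≠ 0) (ha₁ : a ≠ 1)
    {R : E →L[𝕜] E} {D : ∀ i, K i →L[𝕜] K i} (hR : ∀ i, (Δ i)† ∘L R = D i ∘L (Δ i)†) (i : ι) :
    (a⁻¹ • ∑ j, (Γ j ∘L D j) ∘L (Γ j)†) ∘L Γ i = Γ i ∘L D i := by
  have sum_Δ_eq_zero : ∑ j, (Γ j ∘L D j) ∘L (Δ j)† = 0 :=
    calc ∑ j, (Γ j ∘L D j) ∘L (Δ j)† = (∑ j, Γ j ∘L (Δ j)†) ∘L R := by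
          simp only [finsetSum_comp, comp_assoc, hR]
      _ = 0 := by rw [h.sum_comp_adjoint, zero_comp]
  have gram := h.sum_comp_adjoint_comp_add ha₁ (fun j ↦ Γ j ∘L D j) i
  rw [sum_Δ_eq_zero, zero_comp, smul_zero, add_zero] at gram
  rw [smul_comp, gram, inv_smul_smul₀ ha₀]

theorem exists_eq_smul_one_of_adjoint_comp_eq (h : CoxeterRelations a Γ Δ) (ha₀ : a ≠ 0)
    (ha₁ : a ≠ 1) (hsum : ∑ i, Δ i ∘L (Δ i)† = (a / (a - 1)) • (1 : E →L[𝕜] E))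
    (htrans : IsTransitiveSystem fun i ↦ (Γ i).range)
    {R : E →L[𝕜] E} {D : ∀ i, K i →L[𝕜] K i} (hR : ∀ i, (Δ i)† ∘L R = D i ∘L (Δ i)†) :
    ∃ c : 𝕜, R = c • 1 := by
  have intertwines := h.inv_smul_sum_comp_eq ha₀ ha₁ hR
  obtain ⟨c, hc⟩ := htrans _ fun i ↦
    (mapsTo_range_iff_exists_comp_eq (h.adjoint_comp_self_left i)).mpr ⟨D i, intertwines i⟩
  have D_eq (i : ι) : D i = c • 1 :=
    calc D i = ((Γ i)† ∘L Γ i) ∘L D i := by rw [h.adjoint_comp_self_left, one_def, id_comp]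
      _ = (Γ i)† ∘L (c • 1) ∘L Γ i := by rw [comp_assoc, ← intertwines, hc]
      _ = c • 1 := by
        rw [smul_comp, one_def, id_comp, comp_smul, h.adjoint_comp_self_left]
  refine ⟨c, eq_of_sum_comp_eq_smul_one (div_ne_zero ha₀ (sub_ne_zero.mpr ha₁)) hsum fun i ↦ ?_⟩
  rw [hR, D_eq, smul_comp, comp_smul, one_def, one_def, id_comp, comp_id]

end CoxeterRelations

theorem stmt_13_general {a : 𝕜} (ha₀ : a ≠ 0) (ha₁ : a ≠ 1)
    {Γ : ∀ i, K i →L[𝕜] H} {Δ : ∀ i, K i →L[𝕜] E} (h : CoxeterRelations a Γ Δ)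
    (hsum : ∑ i, Δ i ∘L (Δ i)† = (a / (a - 1)) • (1 : E →L[𝕜] E))
    (htrans : IsTransitiveSystem fun i ↦ (Γ i).range) :
    IsTransitiveSystem fun i ↦ (Δ i).range := by
  intro R hR
  choose D hD using fun i ↦
    (mapsTo_range_iff_exists_comp_eq (h.adjoint_comp_self_right i)).mp (hR i)
  have adjoint_intertwines (i : ι) : (Δ i)† ∘L R† = (D i)† ∘L (Δ i)† := by
    rw [← adjoint_comp, hD, adjoint_comp]
  obtain ⟨c, hc⟩ :=
    h.exists_eq_smul_one_of_adjoint_comp_eq ha₀ ha₁ hsum htrans adjoint_intertwines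
  exact ⟨star c, by rw [← adjoint_adjoint R, hc, map_smulₛₗ, adjoint_one]; rfl⟩

end Coxeter

open ContinuousLinearMap in
/-- The Coxeter functor preserves transitivity: if the system of the
ranges of the `P_i` is transitive, then so is the system of the ranges of the
`Q_i = Δ_iΔ_i*`. -/
theorem stmt_13
    {n : ℕ} {H E : Type*}
    [NormedAddCommGroup H] [InnerProductSpace ℂ H] [CompleteSpace H]
    [NormedAddCommGroup E] [InnerProductSpace ℂ E] [CompleteSpace E]
    {K : Fin n → Type*}
    [∀ i, NormedAddCommGroup (K i)] [∀ i, InnerProductSpace ℂ (K i)] [∀ i, CompleteSpace (K i)]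
    (α : ℝ) (hα : 1 < α)
    (P : Fin n → H →L[ℂ] H)
    (hPsa : ∀ i, IsSelfAdjoint (P i)) (hPidem : ∀ i, P i ∘L P i = P i)
    (hPsum : ∑ i, P i = (α : ℂ) • (1 : H →L[ℂ] H))
    (Γ : ∀ i, K i →L[ℂ] H)
    (hΓ₁ : ∀ i, adjoint (Γ i) ∘L Γ i = 1) (hΓ₂ : ∀ i, Γ i ∘L adjoint (Γ i) = P i)
    (Δ : ∀ i, K i →L[ℂ] E)
    (hΔ₁ : ∀ i, adjoint (Δ i) ∘L Δ i = 1)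
    (hΔ₂ : ∑ i, Γ i ∘L adjoint (Δ i) = 0)
    (hΔ₃ : ∀ i j, i ≠ j →
      adjoint (Δ i) ∘L Δ j = (-((α : ℂ) - 1)⁻¹) • (adjoint (Γ i) ∘L Γ j))
    (hQsum : ∑ i, Δ i ∘L adjoint (Δ i) =
      ((α : ℂ) / ((α : ℂ) - 1)) • (1 : E →L[ℂ] E))
    (htrans : ∀ R : H →L[ℂ] H,
      (∀ i, ⇑R '' Set.range ⇑(P i) ⊆ Set.range ⇑(P i)) →
      ∃ c : ℂ, R = c • (1 : H →L[ℂ] H)) :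
    ∀ R : E →L[ℂ] E,
      (∀ i, ⇑R '' Set.range ⇑(Δ i ∘L adjoint (Δ i)) ⊆ Set.range ⇑(Δ i ∘L adjoint (Δ i))) →
      ∃ c : ℂ, R = c • (1 : E →L[ℂ] E) := by
  have hα₀ : (α : ℂ) ≠ 0 := by exact_mod_cast (zero_lt_one.trans hα).ne'
  have hα₁ : (α : ℂ) ≠ 1 := by exact_mod_cast hα.ne'
  have hΓtrans : IsTransitiveSystem fun i ↦ (Γ i).range := by
    simpa only [IsTransitiveSystem, Set.mapsTo_iff_image_subset, LinearMap.coe_range,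
      ContinuousLinearMap.coe_coe, ← hΓ₂, range_comp_eq_range_of_comp_eq_one (hΓ₁ _)] using htrans
  have hΔtrans := stmt_13_general hα₀ hα₁ ⟨hΓ₁, hΔ₁, hΔ₂, hΔ₃⟩ hQsum hΓtrans
  simpa only [IsTransitiveSystem, Set.mapsTo_iff_image_subset, LinearMap.coe_range,
    ContinuousLinearMap.coe_coe, range_comp_eq_range_of_comp_eq_one (hΔ₁ _)] using hΔtrans
end
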